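/- Let M = {F = 0} be a germ of an irreducible singular real-analytic Levi-flat hypersurface at 0 ∈ ℂⁿ, n ≥ 2, with F(z) = Re(P(z)) + H(z, z̄), where P is a complex homogeneous polynomial of degree k with an isolated singularity at 0 ∈ ℂⁿ, the k-jet of H at 0 vanishes (H(z, z̄) = O(|z|^{k+1})), and H(z, z̄) = conj(H(z̄, z)). Then there exists a germ of holomorphic function f at 0 ∈ ℂⁿ with f(z) = P(z) + O(|z|^{k+1}) such that M = {Re(f) = 0} as germs of sets at 0. -/

import Mathlib

open Filter Topology

/-- Wirtinger derivative ∂/∂z_j of a (complex-valued) function at `p`: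
`(1/2)(∂F/∂x_j − i ∂F/∂y_j)`. -/
noncomputable def wirtZ {n : ℕ} (F : (Fin n → ℂ) → ℂ) (j : Fin n) (p : Fin n → ℂ) : ℂ :=
  (fderiv ℝ F p (Pi.single j 1) - Complex.I * fderiv ℝ F p (Pi.single j Complex.I)) / 2

/-- Wirtinger derivative ∂/∂z̄_j of a (complex-valued) function at `p`:
`(1/2)(∂F/∂x_j + i ∂F/∂y_j)`. -/
noncomputable def wirtZbar {n : ℕ} (F : (Fin n → ℂ) → ℂ) (j : Fin n) (p : Fin n → ℂ) : ℂ :=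
  (fderiv ℝ F p (Pi.single j 1) + Complex.I * fderiv ℝ F p (Pi.single j Complex.I)) / 2

/-- The germ `M = {F = 0}` at `0` is Levi-flat: for every point `p` of `M* = M \ Sing(M)`
near `0` and every `v` with `Σ_j F_{z_j}(p) v_j = 0` one has
`Σ_{i,j} F_{z_i z̄_j}(p) v_i conj(v_j) = 0`. -/
def LeviFlatGerm {n : ℕ} (F : (Fin n → ℂ) → ℝ) : Prop :=
  ∀ᶠ p in 𝓝 (0 : Fin n → ℂ), F p = 0 → fderiv ℝ F p ≠ 0 →
    ∀ v : Fin n → ℂ,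
      (∑ j, wirtZ (fun z => ((F z : ℝ) : ℂ)) j p * v j) = 0 →
      (∑ i, ∑ j, wirtZbar (wirtZ (fun z => ((F z : ℝ) : ℂ)) i) j p * v i * (starRingEnd ℂ) (v j)) = 0

/-- `F` is irreducible in the ring of germs at `0` of real-valued real-analytic functions:
in any factorization `F = g·h` one of the factors is a unit (i.e. does not vanish at `0`). -/
def IrreducibleRGerm {n : ℕ} (F : (Fin n → ℂ) → ℝ) : Prop :=
  ∀ g h : (Fin n → ℂ) → ℝ, AnalyticAt ℝ g 0 → AnalyticAt ℝ h 0 →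
    (∀ᶠ z in 𝓝 (0 : Fin n → ℂ), F z = g z * h z) → g 0 ≠ 0 ∨ h 0 ≠ 0

/-- `φ` is a germ of biholomorphism `(ℂⁿ,0) → (ℂⁿ,0)` with local inverse `ι`. -/
def IsGermBiholo {n : ℕ} (φ ι : (Fin n → ℂ) → (Fin n → ℂ)) : Prop :=
  AnalyticAt ℂ φ 0 ∧ AnalyticAt ℂ ι 0 ∧ φ 0 = 0 ∧ ι 0 = 0 ∧
  (∀ᶠ z in 𝓝 (0 : Fin n → ℂ), ι (φ z) = z) ∧ (∀ᶠ z in 𝓝 (0 : Fin n → ℂ), φ (ι z) = z)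

/-- `φ` is volume-preserving (isochore): the determinant of its complex Jacobian is
identically `1` near `0`. -/
def IsVolumePreserving {n : ℕ} (φ : (Fin n → ℂ) → (Fin n → ℂ)) : Prop :=
  ∀ᶠ z in 𝓝 (0 : Fin n → ℂ), LinearMap.det ((fderiv ℂ φ z).toLinearMap) = 1

/-- `ψ` is a germ of automorphism of `(ℂ,0)`. -/
def IsGermAuto (ψ : ℂ → ℂ) : Prop :=
  AnalyticAt ℂ ψ 0 ∧ ψ 0 = 0 ∧ deriv ψ 0 ≠ 0

/-!
Replace `z̄` by an independent variable `w` and blow up the origin of `ℂⁿ × ℂⁿ`. The strict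
transform of the complexified hypersurface meets the exceptional divisor in the cone `P(z) + P̄(w)
= 0`, which is smooth and connected away from the vertex. Levi-flatness says that a polarized Levi
form vanishes at the real points `w = z̄`, a uniqueness set, hence it vanishes on the whole strict
transform, and there the hypersurface takes the form `f(z) = g(w)`. Comparing leading forms, `f`
and `g` can be scaled to start with `P` and `-P̄`, and averaging with the conjugate equation makes
`g(w)` equal to `-f̄(w)`. Two hypersurfaces with the same leading form, one containing the other,
agree near the origin, so the equation is `f(z) + f̄(w) = 0`, which on `w = z̄` reads `Re f = 0`.
-/

/-! ### Order of vanishing and blow-up -/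

section VanishesToOrder

variable {𝕜 : Type*} [NontriviallyNormedField 𝕜] {E E' G : Type*} [NormedAddCommGroup E]
  [NormedSpace 𝕜 E] [NormedAddCommGroup E'] [NormedSpace 𝕜 E'] [NormedAddCommGroup G]
  [NormedSpace 𝕜 G] {g : E → G} {j : ℕ} {p : FormalMultilinearSeries 𝕜 E G}

/-- The germ of `g` at `0` is analytic and vanishes there to order at least `j`. -/
structure VanishesToOrder (𝕜 : Type*) [NontriviallyNormedField 𝕜] {E G : Type*}
    [NormedAddCommGroup E] [NormedSpace 𝕜 E] [NormedAddCommGroup G] [NormedSpace 𝕜 G] (j : ℕ)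
    (g : E → G) : Prop where
  analyticAt : AnalyticAt 𝕜 g 0
  isBigO : g =O[𝓝 0] fun x => ‖x‖ ^ j

lemma isBigO_norm_pow_of_le {i j : ℕ} (h : i ≤ j) :
    (fun x : E => ‖x‖ ^ j) =O[𝓝 0] fun x => ‖x‖ ^ i := by
  refine .of_bound 1 ?_
  filter_upwards [Metric.ball_mem_nhds (0 : E) one_pos] with y hy
  rw [one_mul, norm_pow, norm_pow, norm_norm]
  exact pow_le_pow_of_le_one (norm_nonneg _) (mem_ball_zero_iff.1 hy).le h

lemma partialSum_eq_zero_of_diag (h0 : ∀ m < j, ∀ x, p m (fun _ => x) = 0) (x : E) :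
    p.partialSum j x = 0 :=
  Finset.sum_eq_zero fun i hi => h0 i (Finset.mem_range.1 hi) x

lemma diag_eq_zero_of_isBigO (hp : HasFPowerSeriesAt g p 0)
    (hg : g =O[𝓝 0] fun x => ‖x‖ ^ j) : ∀ m < j, ∀ x, p m (fun _ => x) = 0 := by
  intro m
  induction m using Nat.strong_induction_on with
  | h m ih =>
    intro hm
    have htaylor := hp.isBigO_sub_partialSum_pow (m + 1)
    have hpartial : ∀ x, p.partialSum (m + 1) x = p m (fun _ => x) := fun x => by
      rw [FormalMultilinearSeries.partialSum, Finset.sum_range_succ,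
        ← FormalMultilinearSeries.partialSum,
        partialSum_eq_zero_of_diag fun i hi => ih i hi (hi.trans hm), zero_add]
    simp only [zero_add, hpartial] at htaylor
    have hdiag := (hg.trans (isBigO_norm_pow_of_le hm)).sub htaylor
    simp only [sub_sub_cancel] at hdiag
    exact hdiag.continuousMultilinearMap_apply_eq_zero

lemma vanishesToOrder_of_diag (hp : HasFPowerSeriesAt g p 0)
    (h0 : ∀ m < j, ∀ x, p m (fun _ => x) = 0) : VanishesToOrder 𝕜 j g where
  analyticAt := hp.analyticAt
  isBigO := by
    simpa only [zero_add, partialSum_eq_zero_of_diag h0, sub_zero]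
      using hp.isBigO_sub_partialSum_pow j

namespace VanishesToOrder

lemma exists_series (h : VanishesToOrder 𝕜 j g) :
    ∃ p : FormalMultilinearSeries 𝕜 E G, HasFPowerSeriesAt g p 0 ∧ ∀ m < j, p m = 0 := by
  obtain ⟨p, r, hr⟩ := h.analyticAt
  have hdiag := diag_eq_zero_of_isBigO hr.hasFPowerSeriesAt h.isBigO
  let q : FormalMultilinearSeries 𝕜 E G := fun m => if m < j then 0 else p m
  refine ⟨q, ⟨r, ?_, hr.r_pos, fun hy => ?_⟩, fun m hm => if_pos hm⟩
  · refine hr.r_le.trans (FormalMultilinearSeries.radius_le_of_le fun m => ?_)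
    by_cases hm : m < j <;> simp [q, hm]
  · convert! hr.hasSum hy using 2 with m
    by_cases hm : m < j <;> simp [q, hm, hdiag]

lemma comp_continuousLinearMap (h : VanishesToOrder 𝕜 j g) (L : E' →L[𝕜] E) :
    VanishesToOrder 𝕜 j (fun x => g (L x)) where
  analyticAt := AnalyticAt.fun_comp (by simpa using h.analyticAt) (L.analyticAt 0)
  isBigO := by
    have hL : Tendsto L (𝓝 0) (𝓝 0) := by simpa using L.continuous.tendsto 0
    exact (h.isBigO.comp_tendsto hL).trans ((L.isBigO_id (𝓝 0)).norm_norm.pow j)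

lemma sub {h : E → G} (hg : VanishesToOrder 𝕜 j g) (hh : VanishesToOrder 𝕜 j h) :
    VanishesToOrder 𝕜 j fun x => g x - h x :=
  ⟨hg.analyticAt.fun_sub hh.analyticAt, hg.isBigO.sub hh.isBigO⟩

lemma const_smul (h : VanishesToOrder 𝕜 j g) (c : 𝕜) : VanishesToOrder 𝕜 j fun x => c • g x :=
  ⟨analyticAt_const.fun_smul h.analyticAt, h.isBigO.const_smul_left c⟩

end VanishesToOrder

lemma tendsto_smul_zero_nhds (ξ : E) :
    Tendsto (fun y : 𝕜 × E => y.1 • y.2) (𝓝 (0, ξ)) (𝓝 0) := by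
  simpa using (continuous_smul (M := 𝕜) (X := E)).tendsto (0, ξ)

end VanishesToOrder

section Blowup

variable {𝕜 : Type*} [NontriviallyNormedField 𝕜] {E G : Type*} [NormedAddCommGroup E]
  [NormedSpace 𝕜 E] [NormedAddCommGroup G] [NormedSpace 𝕜 G] {g : E → G} {j : ℕ}
  {p : FormalMultilinearSeries 𝕜 E G}

/-- The power series of the `j`-linear coefficient `A` in `g x = A x (x, …, x)`: its `m`-th term is
the `(m + j)`-th term of `p`, curried. -/
noncomputable def curryTail (p : FormalMultilinearSeries 𝕜 E G) (j : ℕ) :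
    FormalMultilinearSeries 𝕜 E (E [×j]→L[𝕜] G) := fun m =>
  ContinuousMultilinearMap.curryFinFinset 𝕜 E G
    (s := Finset.univ.map (Fin.castAddEmb j : Fin m ↪ Fin (m + j))) (by simp)
    (by simp [Finset.card_compl]) (p (m + j))

lemma curryTail_apply_diag (m : ℕ) (x y : E) :
    curryTail p j m (fun _ => x) (fun _ => y) =
      p (m + j) ((Finset.univ.map (Fin.castAddEmb j : Fin m ↪ Fin (m + j))).piecewise
        (fun _ => x) fun _ => y) :=
  ContinuousMultilinearMap.curryFinFinset_apply_const _ _ _ _ _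

lemma radius_le_radius_curryTail : p.radius ≤ (curryTail p j).radius := by
  refine ENNReal.le_of_forall_nnreal_lt fun r hr => ?_
  rcases eq_zero_or_pos r with rfl | hr0
  · simp
  obtain ⟨C, -, hC⟩ := p.norm_mul_pow_le_of_lt_radius hr
  refine FormalMultilinearSeries.le_radius_of_bound _ (C / r ^ j) fun m => ?_
  rw [le_div_iff₀ (by positivity), mul_assoc, ← pow_add, curryTail, LinearIsometryEquiv.norm_map]
  exact hC (m + j)

variable [CompleteSpace G]

lemma eventually_eq_sum_curryTail_apply (hp : HasFPowerSeriesAt g p 0)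
    (h0 : ∀ m < j, ∀ x, p m (fun _ => x) = 0) :
    ∀ᶠ x in 𝓝 0, g x = (curryTail p j).sum x fun _ => x := by
  obtain ⟨r, hr⟩ := hp
  filter_upwards [Metric.eball_mem_nhds (0 : E) hr.r_pos] with x hx
  have hsum : HasSum (fun m => p m fun _ => x) (g x) := by simpa using hr.hasSum hx
  have htail : HasSum (fun m => p (m + j) fun _ => x) (g x) := by
    have hhead : ∑ i ∈ Finset.range j, p i (fun _ => x) = 0 := partialSum_eq_zero_of_diag h0 x
    simpa [hhead] using (hasSum_nat_add_iff' j).2 hsum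
  have hA : HasSum (fun m => curryTail p j m fun _ => x) ((curryTail p j).sum x) :=
    (curryTail p j).hasSum
      (Metric.eball_subset_eball (hr.r_le.trans radius_le_radius_curryTail) hx)
  refine htail.unique ?_
  simpa only [ContinuousMultilinearMap.apply_apply, curryTail_apply_diag, Finset.piecewise_same]
    using hA.mapL (ContinuousMultilinearMap.apply 𝕜 (fun _ : Fin j => E) G fun _ => x)

/-- `B` is the blow-up of `g`: it is analytic along the exceptional divisor `t = 0`, where it equals
the leading form of `g`. -/
lemma exists_blowup (hp : HasFPowerSeriesAt g p 0) (h0 : ∀ m < j, ∀ x, p m (fun _ => x) = 0) :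
    ∃ B : 𝕜 × E → G, (∀ ξ, AnalyticAt 𝕜 B (0, ξ)) ∧
      (∀ ξ, ∀ᶠ y in 𝓝 ((0 : 𝕜), ξ), g (y.1 • y.2) = y.1 ^ j • B y) ∧
      ∀ ξ, B (0, ξ) = p j fun _ => ξ := by
  set A := (curryTail p j).sum
  have hA : HasFPowerSeriesAt A (curryTail p j) 0 :=
    ((curryTail p j).hasFPowerSeriesOnBall
      (hp.radius_pos.trans_le radius_le_radius_curryTail)).hasFPowerSeriesAt
  refine ⟨fun y => A (y.1 • y.2) fun _ => y.2, fun ξ => ?_, fun ξ => ?_, fun ξ => ?_⟩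
  · have hAsmul : AnalyticAt 𝕜 (fun y : 𝕜 × E => A (y.1 • y.2)) (0, ξ) :=
      AnalyticAt.fun_comp (by simpa using hA.analyticAt) (analyticAt_fst.smul analyticAt_snd)
    exact ((ContinuousLinearMap.id 𝕜 (E [×j]→L[𝕜] G)).analyticAt_uncurry_of_multilinear).comp₂
      hAsmul (AnalyticAt.pi fun _ => analyticAt_snd)
  · filter_upwards [(tendsto_smul_zero_nhds ξ).eventually
      (eventually_eq_sum_curryTail_apply hp h0)] with y hy
    simpa [hy] using (A (y.1 • y.2)).map_smul_univ (fun _ => y.1) fun _ => y.2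
  · calc A ((0 : 𝕜) • ξ) (fun _ => ξ) = curryTail p j 0 (fun _ => ξ) (fun _ => ξ) := by
          rw [zero_smul, ← hA.coeff_zero]
      _ = p j fun _ => ξ := by
          rw [curryTail_apply_diag, Finset.piecewise_same]
          exact p.congr (zero_add j) fun _ _ _ => rfl

end Blowup

/-! ### Complexification and polarization -/

section Complexify

variable {ι : Type*} [Fintype ι]

section Series

variable [DecidableEq ι]

/-- The complexification of a power series with real coefficients, expanded in monomials. -/
noncomputable def complexifySeries (p : FormalMultilinearSeries ℝ (ι → ℝ) ℝ) :
    FormalMultilinearSeries ℂ (ι → ℂ) ℂ := fun m =>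
  ∑ f : Fin m → ι, ((p m (fun a => Pi.single (f a) 1) : ℝ) : ℂ) •
    (ContinuousMultilinearMap.mkPiAlgebra ℂ (Fin m) ℂ).compContinuousLinearMap
      (fun a => ContinuousLinearMap.proj (R := ℂ) (φ := fun _ : ι => ℂ) (f a))

variable (p : FormalMultilinearSeries ℝ (ι → ℝ) ℝ) (m : ℕ)

lemma complexifySeries_apply (x : Fin m → ι → ℂ) : complexifySeries p m x =
    ∑ f : Fin m → ι, ((p m (fun a => Pi.single (f a) 1) : ℝ) : ℂ) * ∏ a, x a (f a) := by
  simp [complexifySeries]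

lemma complexifySeries_ofReal (x : ι → ℝ) :
    complexifySeries p m (fun _ i => (x i : ℂ)) = ((p m (fun _ => x) : ℝ) : ℂ) := by
  have hexpand : p m (fun _ => x) =
      ∑ f : Fin m → ι, p m (fun a => Pi.single (f a) 1) * ∏ a, x (f a) := by
    conv_lhs => rw [pi_eq_sum_univ' x]
    simp only [ContinuousMultilinearMap.map_sum, ContinuousMultilinearMap.map_smul_univ,
      smul_eq_mul, mul_comm]
  rw [complexifySeries_apply, hexpand]
  push_cast
  rfl

lemma complexifySeries_star (x : ι → ℂ) :
    complexifySeries p m (fun _ => star x) = star (complexifySeries p m fun _ => x) := by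
  simp [complexifySeries_apply]

lemma norm_complexifySeries_le :
    ‖complexifySeries p m‖ ≤ (Fintype.card ι : ℝ) ^ m * ‖p m‖ := by
  refine ContinuousMultilinearMap.opNorm_le_bound (by positivity) fun x => ?_
  have hterm : ∀ f : Fin m → ι,
      ‖((p m (fun a => Pi.single (f a) 1) : ℝ) : ℂ) * ∏ a, x a (f a)‖ ≤ ‖p m‖ * ∏ a, ‖x a‖ := by
    intro f
    rw [norm_mul, norm_prod, Complex.norm_real]
    gcongr with a
    · simpa [Pi.norm_single] using (p m).le_opNorm fun a => Pi.single (f a) 1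
    · exact norm_le_pi_norm _ _
  calc ‖complexifySeries p m x‖ ≤ ∑ _f : Fin m → ι, ‖p m‖ * ∏ a, ‖x a‖ := by
        rw [complexifySeries_apply]
        exact norm_sum_le_of_le _ fun f _ => hterm f
    _ = Fintype.card ι ^ m * ‖p m‖ * ∏ a, ‖x a‖ := by simp [mul_assoc]

lemma radius_complexifySeries_pos {p : FormalMultilinearSeries ℝ (ι → ℝ) ℝ} (hp : 0 < p.radius) :
    0 < (complexifySeries p).radius := by
  obtain ⟨s, hs0, hs⟩ := ENNReal.lt_iff_exists_nnreal_btwn.1 hp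
  obtain ⟨C, -, hC⟩ := p.norm_mul_pow_le_of_lt_radius hs
  have hs0 : 0 < s := by exact_mod_cast hs0
  have hpos : (0 : ENNReal) < (s / (Fintype.card ι + 1) : NNReal) := by
    exact_mod_cast (by positivity : 0 < s / (Fintype.card ι + 1))
  refine hpos.trans_le (FormalMultilinearSeries.le_radius_of_bound _ C fun m => ?_)
  calc ‖complexifySeries p m‖ * ((s / (Fintype.card ι + 1) : NNReal) : ℝ) ^ m
      ≤ ((Fintype.card ι + 1 : ℝ) ^ m * ‖p m‖) * ((s / (Fintype.card ι + 1) : NNReal) : ℝ) ^ m := by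
        gcongr
        refine (norm_complexifySeries_le p m).trans ?_
        gcongr
        linarith
    _ = ‖p m‖ * s ^ m := by
        push_cast
        rw [div_pow]
        field_simp
    _ ≤ C := hC m

end Series

lemma exists_complexify {j : ℕ} {g : (ι → ℝ) → ℝ} (h : VanishesToOrder ℝ j g) :
    ∃ G : (ι → ℂ) → ℂ, VanishesToOrder ℂ j G ∧
      (∀ᶠ x in 𝓝 (0 : ι → ℝ), G (fun i => (x i : ℂ)) = ((g x : ℝ) : ℂ)) ∧
      ∀ x, G (star x) = star (G x) := by
  classical
  obtain ⟨p, ⟨r, hr⟩, h0⟩ := h.exists_series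
  have hseries := (complexifySeries p).hasFPowerSeriesOnBall
    (radius_complexifySeries_pos (hr.r_pos.trans_le hr.r_le))
  refine ⟨(complexifySeries p).sum,
    vanishesToOrder_of_diag hseries.hasFPowerSeriesAt fun m hm x => ?_, ?_, fun x => ?_⟩
  · simp [complexifySeries_apply, h0 m hm]
  · filter_upwards [Metric.eball_mem_nhds (0 : ι → ℝ) hr.r_pos] with x hx
    have hsum : HasSum (fun m => p m fun _ => x) (g x) := by simpa using hr.hasSum hx
    rw [FormalMultilinearSeries.sum, ← (Complex.hasSum_ofReal.2 hsum).tsum_eq]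
    exact tsum_congr fun m => complexifySeries_ofReal p m x
  · rw [FormalMultilinearSeries.sum, FormalMultilinearSeries.sum, tsum_star]
    exact tsum_congr fun m => complexifySeries_star p m x

end Complexify

section Polarization

variable (ι : Type*)

/-- The point `x + i y` of `ℂ^ι` with real coordinates `(x, y)`. -/
noncomputable def ofReIm : (ι ⊕ ι → ℝ) →L[ℝ] (ι → ℂ) :=
  .pi fun i => Complex.ofRealCLM.comp (.proj (Sum.inl i)) +
    Complex.I • Complex.ofRealCLM.comp (.proj (Sum.inr i))

/-- The real coordinates `(x, y)` of a point `x + i y` of `ℂ^ι`. -/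
noncomputable def toReIm : (ι → ℂ) →L[ℝ] (ι ⊕ ι → ℝ) :=
  .pi (Sum.elim (fun i => Complex.reCLM.comp (.proj i)) fun i => Complex.imCLM.comp (.proj i))

/-- The complexification `((z + w) / 2, (z - w) / 2i)` of the real coordinates, with `w` in the role
of `z̄`. -/
noncomputable def polarReIm : (ι → ℂ) × (ι → ℂ) →L[ℂ] (ι ⊕ ι → ℂ) :=
  .pi (Sum.elim
    (fun i => (2 : ℂ)⁻¹ • ((ContinuousLinearMap.proj i).comp (.fst ℂ _ _) +
      (ContinuousLinearMap.proj i).comp (.snd ℂ _ _)))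
    (fun i => (2 * Complex.I)⁻¹ • ((ContinuousLinearMap.proj i).comp (.fst ℂ _ _) -
      (ContinuousLinearMap.proj i).comp (.snd ℂ _ _))))

variable {ι}

lemma ofReIm_toReIm (z : ι → ℂ) : ofReIm ι (toReIm ι z) = z := by
  ext i
  simpa [ofReIm, toReIm, mul_comm] using Complex.re_add_im (z i)

lemma polarReIm_star (z : ι → ℂ) :
    polarReIm ι (z, star z) = fun i => ((toReIm ι z i : ℝ) : ℂ) := by
  ext (i | i)
  · simp [polarReIm, toReIm, ← mul_add, Complex.add_conj]
  · simp [polarReIm, toReIm, Complex.sub_conj]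
    field_simp
    simp

lemma polarReIm_star_swap (z w : ι → ℂ) :
    polarReIm ι (star w, star z) = star (polarReIm ι (z, w)) := by
  ext (i | i)
  · simp [polarReIm, add_comm]
  · simp [polarReIm]
    ring

lemma exists_polarization [Fintype ι] {j : ℕ} {H : (ι → ℂ) → ℝ} (hH : VanishesToOrder ℝ j H) :
    ∃ HC : (ι → ℂ) × (ι → ℂ) → ℂ, VanishesToOrder ℂ j HC ∧
      (∀ᶠ z in 𝓝 0, HC (z, star z) = ((H z : ℝ) : ℂ)) ∧
      ∀ z w, HC (star w, star z) = star (HC (z, w)) := by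
  obtain ⟨G, hG, hreal, hstar⟩ := exists_complexify (hH.comp_continuousLinearMap (ofReIm ι))
  refine ⟨fun ξ => G (polarReIm ι ξ), hG.comp_continuousLinearMap _, ?_, fun z w => ?_⟩
  · have hcont : Tendsto (toReIm ι) (𝓝 0) (𝓝 0) := by
      simpa using (toReIm ι).continuous.tendsto 0
    filter_upwards [hcont.eventually hreal] with z hz
    rw [polarReIm_star, hz, ofReIm_toReIm]
  · simp only [polarReIm_star_swap, hstar]

end Polarization

/-! ### Conjugation of germs -/

section StarConj

/-- The conjugate `w ↦ conj (p (conj w))` of a function: conjugation of the Taylor coefficients. -/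
def starConj {V : Type*} [Star V] (p : V → ℂ) (w : V) : ℂ := star (p (star w))

lemma star_update {ι V : Type*} [DecidableEq ι] [Star V] (x : ι → V) (a : ι) (u : V) :
    (fun b => star (Function.update x a u b)) =
      Function.update (fun b => star (x b)) a (star u) :=
  Function.comp_update star x a u

variable {V : Type*} [NormedAddCommGroup V] [NormedSpace ℂ V] [StarAddMonoid V] [StarModule ℂ V]
  [NormedStarGroup V]

/-- The power series `m ↦ conj ∘ p m ∘ conj`. -/
noncomputable def starConjSeries (p : FormalMultilinearSeries ℂ V ℂ) :
    FormalMultilinearSeries ℂ V ℂ := fun m =>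
  MultilinearMap.mkContinuous
    { toFun := fun x => star (p m fun a => star (x a))
      map_update_add' := fun x a u v => by
        simp only [star_update, star_add, ContinuousMultilinearMap.map_update_add]
      map_update_smul' := fun x a c u => by
        simp only [star_update, star_smul, ContinuousMultilinearMap.map_update_smul, star_star] }
    ‖p m‖ (fun x => by simpa using (p m).le_opNorm fun a => star (x a))

lemma analyticAt_starConj {p : V → ℂ} {z : V} (hp : AnalyticAt ℂ p (star z)) :
    AnalyticAt ℂ (starConj p) z := by
  obtain ⟨q, r, hr⟩ := hp
  refine ⟨starConjSeries q, r, ?_, hr.r_pos, fun {y} hy => ?_⟩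
  · exact hr.r_le.trans (FormalMultilinearSeries.radius_le_of_le fun m =>
      MultilinearMap.mkContinuous_norm_le _ (norm_nonneg _) _)
  · have hy' : star y ∈ Metric.eball (0 : V) r := by
      simpa [enorm_eq_nnnorm] using hy
    simpa only [starConj, star_add] using! (hr.hasSum hy').star

end StarConj

/-! ### Homogeneous forms with an isolated critical point -/

section IsolatedForm

variable {V : Type*} [NormedAddCommGroup V] [NormedSpace ℂ V]

/-- `p` is an entire function on `V`, homogeneous of degree `k > 0`, whose only possible
critical point is the origin and which has a nontrivial zero; the last condition is where `n ≥ 2`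
enters. -/
structure IsIsolatedForm (k : ℕ) (p : V → ℂ) : Prop where
  pos : 0 < k
  analyticAt : ∀ z, AnalyticAt ℂ p z
  map_smul : ∀ (s : ℂ) z, p (s • z) = s ^ k * p z
  exists_fderiv_ne_zero : ∀ z ≠ 0, ∃ h, fderiv ℂ p z h ≠ 0
  exists_zero : ∃ l ≠ 0, p l = 0

open Bornology in
/-- Otherwise `s ↦ 1 / p (a + s b)` would be a nonzero entire function tending to `0` at infinity,
since `p (a + s b) ∼ s ^ k p b`. -/
lemma exists_zero_of_homogeneous {k : ℕ} (hk : 0 < k) {p : V → ℂ} (hp : Differentiable ℂ p)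
    (hom : ∀ (s : ℂ) z, p (s • z) = s ^ k * p z) {a b : V} (hab : LinearIndependent ℂ ![a, b]) :
    ∃ l ≠ 0, p l = 0 := by
  by_contra! hne
  have hline : ∀ s : ℂ, a + s • b ≠ 0 := fun s hs =>
    one_ne_zero (LinearIndependent.pair_iff.1 hab 1 s (by simpa using hs)).1
  have hpb : p b ≠ 0 := hne b (by simpa using hab.ne_zero 1)
  have hlim : Tendsto (fun s : ℂ => p (s⁻¹ • a + b)) (cobounded ℂ) (𝓝 (p b)) := by
    have hcont : Continuous fun t : ℂ => p (t • a + b) := hp.continuous.comp (by fun_prop)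
    simpa [Function.comp_def] using (hcont.tendsto 0).comp (tendsto_inv₀_cobounded (α := ℂ))
  have hpow : Tendsto (fun s : ℂ => ‖s‖ ^ k) (cobounded ℂ) atTop :=
    (tendsto_pow_atTop hk.ne').comp tendsto_norm_cobounded_atTop
  have hinfty : Tendsto (fun s : ℂ => ‖p (a + s • b)‖) (cobounded ℂ) atTop := by
    refine (hpow.atTop_mul_pos (norm_pos_iff.2 hpb) hlim.norm).congr' ?_
    filter_upwards [eventually_ne_cobounded (0 : ℂ)] with s hs
    rw [← norm_pow, ← norm_mul, ← hom, smul_add, smul_inv_smul₀ hs]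
  have hinv : Differentiable ℂ fun s : ℂ => (p (a + s • b))⁻¹ :=
    Differentiable.inv (hp.comp (by fun_prop)) fun s => hne _ (hline s)
  have hzero : Tendsto (fun s : ℂ => (p (a + s • b))⁻¹) (cocompact ℂ) (𝓝 0) := by
    rw [← Metric.cobounded_eq_cocompact]
    exact tendsto_inv₀_cobounded.comp (tendsto_norm_atTop_iff_cobounded.1 hinfty)
  exact inv_ne_zero (hne _ (hline 0)) (hinv.apply_eq_of_tendsto_cocompact 0 hzero)

namespace IsIsolatedForm

variable {k : ℕ} {p : V → ℂ}

lemma apply_zero (h : IsIsolatedForm k p) : p 0 = 0 := by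
  simpa [h.pos.ne'] using h.map_smul 0 0

lemma surjective (h : IsIsolatedForm k p) : Function.Surjective p := by
  obtain ⟨z, hz⟩ : ∃ z, p z ≠ 0 := by
    by_contra! hzero
    obtain ⟨l, hl, -⟩ := h.exists_zero
    obtain ⟨v, hv⟩ := h.exists_fderiv_ne_zero l hl
    simp [show p = fun _ => 0 from funext hzero] at hv
  intro c
  obtain ⟨s, hs⟩ := IsAlgClosed.exists_pow_nat_eq (c / p z) h.pos
  exact ⟨s • z, by rw [h.map_smul, hs, div_mul_cancel₀ _ hz]⟩

lemma starConj [StarAddMonoid V] [StarModule ℂ V] [NormedStarGroup V] (h : IsIsolatedForm k p) :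
    IsIsolatedForm k (starConj p) where
  pos := h.pos
  analyticAt z := analyticAt_starConj (h.analyticAt _)
  map_smul s z := by simp [_root_.starConj, h.map_smul]
  exists_fderiv_ne_zero z hz := by
    obtain ⟨v, hv⟩ := h.exists_fderiv_ne_zero (star z) (star_ne_zero.2 hz)
    have hderiv := (h.analyticAt (star z)).differentiableAt.hasFDerivAt.star_star
    rw [star_star] at hderiv
    refine ⟨star v, ?_⟩
    rw [show _root_.starConj p = star ∘ p ∘ star from rfl, hderiv.fderiv]
    simpa using hv
  exists_zero := by
    obtain ⟨l, hl, hpl⟩ := h.exists_zero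
    exact ⟨star l, star_ne_zero.2 hl, by simp [_root_.starConj, hpl]⟩

end IsIsolatedForm

end IsolatedForm

section MvPolynomial

open MvPolynomial

lemma hasFDerivAt_eval_mvPolynomial {𝕜 σ : Type*} [NontriviallyNormedField 𝕜] [Fintype σ]
    (P : MvPolynomial σ 𝕜) (z : σ → 𝕜) :
    HasFDerivAt (fun z => eval z P) (∑ i, eval z (pderiv i P) •
      ContinuousLinearMap.proj (R := 𝕜) (φ := fun _ : σ => 𝕜) i) z := by
  classical
  induction P using MvPolynomial.induction_on with
  | C a =>
    simp only [eval_C]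
    refine (hasFDerivAt_const (𝕜 := 𝕜) a z).congr_fderiv ?_
    ext v
    simp
  | add p q hp hq =>
    simp only [map_add]
    refine (hp.fun_add hq).congr_fderiv ?_
    ext v
    simp [add_mul, Finset.sum_add_distrib]
  | mul_X p i hp =>
    have hmul := hp.mul (ContinuousLinearMap.proj (R := 𝕜) (φ := fun _ : σ => 𝕜) i).hasFDerivAt
    simp only [map_mul, eval_X]
    refine hmul.congr_fderiv ?_
    ext v
    simp [pderiv_X, Pi.single_apply, add_mul, Finset.sum_add_distrib, Finset.mul_sum, apply_ite,
      mul_assoc]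

lemma eval_smul_of_isHomogeneous {R σ : Type*} [CommSemiring R] {k : ℕ} {P : MvPolynomial σ R}
    (hP : P.IsHomogeneous k) (s : R) (z : σ → R) : eval (s • z) P = s ^ k * eval z P := by
  rw [eval_eq, eval_eq, Finset.mul_sum]
  refine Finset.sum_congr rfl fun d hd => ?_
  have hdeg : ∑ i ∈ d.support, d i = k := by
    simpa [Finsupp.weight_apply, Finsupp.sum] using hP (mem_support_iff.1 hd)
  simp only [Pi.smul_apply, smul_eq_mul, mul_pow, Finset.prod_mul_distrib,
    Finset.prod_pow_eq_pow_sum, hdeg]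
  ring

lemma exists_eval_pderiv_ne_zero {𝕜 σ : Type*} [NontriviallyNormedField 𝕜] {k : ℕ}
    {P : MvPolynomial σ 𝕜} (hP : P.IsHomogeneous k)
    (hsing : ∀ᶠ z in 𝓝 (0 : σ → 𝕜), (∀ i, eval z (pderiv i P) = 0) → z = 0) {z : σ → 𝕜}
    (hz : z ≠ 0) : ∃ i, eval z (pderiv i P) ≠ 0 := by
  by_contra! hcrit
  have hline : Tendsto (fun s : 𝕜 => s • z) (𝓝[≠] 0) (𝓝 0) := by
    have hcont : Continuous fun s : 𝕜 => s • z := by fun_prop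
    simpa using (hcont.tendsto 0).mono_left nhdsWithin_le_nhds
  obtain ⟨s, hs, hs0⟩ := ((hline.eventually hsing).and self_mem_nhdsWithin).exists
  refine smul_ne_zero hs0 hz (hs fun i => ?_)
  rw [eval_smul_of_isHomogeneous hP.pderiv, hcrit i, mul_zero]

lemma isIsolatedForm_eval {n k : ℕ} (hn : 2 ≤ n) (hk : 0 < k) {P : MvPolynomial (Fin n) ℂ}
    (hP : P.IsHomogeneous k)
    (hsing : ∀ᶠ z in 𝓝 (0 : Fin n → ℂ), (∀ i, eval z (pderiv i P) = 0) → z = 0) :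
    IsIsolatedForm k (fun z => eval z P) where
  pos := hk
  analyticAt z := AnalyticOnNhd.eval_mvPolynomial P z (Set.mem_univ _)
  map_smul := eval_smul_of_isHomogeneous hP
  exists_fderiv_ne_zero z hz := by
    obtain ⟨i, hi⟩ := exists_eval_pderiv_ne_zero hP hsing hz
    refine ⟨Pi.single i 1, ?_⟩
    rw [(hasFDerivAt_eval_mvPolynomial P z).fderiv]
    simpa [Pi.single_apply] using hi
  exists_zero := by
    have hind : LinearIndependent ℂ ![Pi.basisFun ℂ (Fin n) ⟨0, by omega⟩,
        Pi.basisFun ℂ (Fin n) ⟨1, by omega⟩] := by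
      convert (Pi.basisFun ℂ (Fin n)).linearIndependent.comp
        ![⟨0, by omega⟩, ⟨1, by omega⟩] (by simp) using 1
      ext i; fin_cases i <;> rfl
    exact exists_zero_of_homogeneous hk
      (fun z => (hasFDerivAt_eval_mvPolynomial P z).differentiableAt)
      (eval_smul_of_isHomogeneous hP) hind

end MvPolynomial

/-! ### Regular analytic hypersurfaces -/

section Retraction

variable {𝕜 : Type*} [RCLike 𝕜] {Y : Type*} [NormedAddCommGroup Y] [NormedSpace 𝕜 Y]
  {Φ κ : Y → 𝕜} {y₀ v : Y}

/-- `y ↦ y + κ y • v` is an analytic germ of retraction at `y₀` onto the hypersurface `{Φ = 0}`,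
along the transversal direction `v`: near `(y₀, 0)`, the point `y + t • v` lies on the hypersurface
exactly for `t = κ y`. -/
structure IsRetractionAt (Φ : Y → 𝕜) (y₀ v : Y) (κ : Y → 𝕜) : Prop where
  analyticAt : AnalyticAt 𝕜 κ y₀
  apply_self : κ y₀ = 0
  eventually_iff : ∀ᶠ x in 𝓝 (y₀, (0 : 𝕜)), Φ (x.1 + x.2 • v) = 0 ↔ κ x.1 = x.2

open scoped ContDiff in
lemma exists_isRetractionAt [CompleteSpace Y] (hΦ : AnalyticAt 𝕜 Φ y₀) (h0 : Φ y₀ = 0)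
    (hv : fderiv 𝕜 Φ y₀ v ≠ 0) : ∃ κ, IsRetractionAt Φ y₀ v κ := by
  let shear : Y × 𝕜 →L[𝕜] Y := .coprod (.id 𝕜 Y) (.toSpanSingleton 𝕜 v)
  have hshear : shear (y₀, 0) = y₀ := by simp [shear]
  have han : AnalyticAt 𝕜 (Φ ∘ shear) (y₀, 0) :=
    AnalyticAt.comp (by rwa [hshear]) (shear.analyticAt _)
  have hderiv : fderiv 𝕜 (Φ ∘ shear) (y₀, 0) ∘L .inr 𝕜 Y 𝕜 =
      .toSpanSingleton 𝕜 (fderiv 𝕜 Φ y₀ v) := by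
    rw [fderiv_comp _ (by rw [hshear]; exact hΦ.differentiableAt) shear.differentiableAt,
      ContinuousLinearMap.fderiv, hshear]
    ext
    simp [shear]
  have hinv : (fderiv 𝕜 (Φ ∘ shear) (y₀, 0) ∘L .inr 𝕜 Y 𝕜).IsInvertible :=
    ⟨.unitsEquivAut 𝕜 (.mk0 _ hv), by rw [hderiv]; ext; simp⟩
  have hCω : ContDiffAt 𝕜 ω (Φ ∘ shear) (y₀, 0) := han.contDiffAt
  refine ⟨hCω.implicitFunction (by simp) hinv, (hCω.contDiffAt_implicitFunction _ hinv).analyticAt,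
    hCω.implicitFunction_apply_self _ hinv, ?_⟩
  filter_upwards [hCω.eventually_apply_eq_iff_implicitFunction (by simp) hinv] with x hx
  simpa [shear, h0] using hx

namespace IsRetractionAt

lemma tendsto (hκ : IsRetractionAt Φ y₀ v κ) :
    Tendsto (fun y => y + κ y • v) (𝓝 y₀) (𝓝 y₀) := by
  simpa [hκ.apply_self] using
    continuousAt_id.tendsto.add (hκ.analyticAt.continuousAt.tendsto.smul_const v)

lemma analyticAt_comp {G : Type*} [NormedAddCommGroup G] [NormedSpace 𝕜 G] {h : Y → G} {y : Y}
    (hκ : AnalyticAt 𝕜 κ y) (hh : AnalyticAt 𝕜 h (y + κ y • v)) :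
    AnalyticAt 𝕜 (fun y => h (y + κ y • v)) y :=
  AnalyticAt.fun_comp hh (analyticAt_id.add (hκ.smul analyticAt_const))

lemma eventually_apply_eq_zero (hκ : IsRetractionAt Φ y₀ v κ) :
    ∀ᶠ y in 𝓝 y₀, Φ (y + κ y • v) = 0 := by
  have hgraph : Tendsto (fun y => (y, κ y)) (𝓝 y₀) (𝓝 (y₀, 0)) := by
    simpa [hκ.apply_self] using
      continuousAt_id.tendsto.prodMk_nhds hκ.analyticAt.continuousAt.tendsto
  filter_upwards [hgraph.eventually hκ.eventually_iff] with y hy using hy.2 rfl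

lemma eventually_eq_zero (hκ : IsRetractionAt Φ y₀ v κ) :
    ∀ᶠ y in 𝓝 y₀, Φ y = 0 → κ y = 0 := by
  have hzero : Tendsto (fun y : Y => (y, (0 : 𝕜))) (𝓝 y₀) (𝓝 (y₀, 0)) :=
    continuousAt_id.tendsto.prodMk_nhds tendsto_const_nhds
  filter_upwards [hzero.eventually hκ.eventually_iff] with y hy hΦy using hy.1 (by simpa using hΦy)

end IsRetractionAt

lemma exists_implicit [CompleteSpace Y] {Z : Type*} [NormedAddCommGroup Z] [NormedSpace 𝕜 Z]
    (hΦ : AnalyticAt 𝕜 Φ y₀) (h0 : Φ y₀ = 0) (hv : fderiv 𝕜 Φ y₀ v ≠ 0) (j : Z →L[𝕜] Y) :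
    ∃ τ : Z → 𝕜, AnalyticAt 𝕜 τ 0 ∧ τ 0 = 0 ∧ ∀ᶠ p in 𝓝 0, Φ (y₀ + j p + τ p • v) = 0 := by
  obtain ⟨κ, hκ⟩ := exists_isRetractionAt hΦ h0 hv
  have hj : Tendsto (fun p => y₀ + j p) (𝓝 0) (𝓝 y₀) := by
    simpa using tendsto_const_nhds.add (j.continuous.tendsto 0)
  refine ⟨fun p => κ (y₀ + j p), ?_, by simp [hκ.apply_self],
    hj.eventually hκ.eventually_apply_eq_zero⟩
  exact AnalyticAt.fun_comp (by simpa using hκ.analyticAt) (analyticAt_const.add (j.analyticAt 0))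

end Retraction

section Continuation

variable {Y : Type*} [NormedAddCommGroup Y] [NormedSpace ℂ Y] {Φ : Y → ℂ} {y₀ v : Y}

/-- The neighbourhood `W₁` depends neither on `h` nor on the convex `v`-cylinder `C`. -/
lemma exists_nhds_continuation [CompleteSpace Y] (hΦ : AnalyticAt ℂ Φ y₀) (h0 : Φ y₀ = 0)
    (hv : fderiv ℂ Φ y₀ v ≠ 0) {W₀ : Set Y} (hW₀ : W₀ ∈ 𝓝 y₀) :
    ∃ W₁ ∈ 𝓝 y₀, ∀ C, Convex ℝ C → (∀ y ∈ C, ∀ t : ℂ, y + t • v ∈ C) →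
      ∀ h : Y → ℂ, (∀ y ∈ W₀ ∩ C, AnalyticAt ℂ h y) → ∀ y₁ ∈ W₁ ∩ C, Φ y₁ = 0 →
      (∀ᶠ y in 𝓝 y₁, Φ y = 0 → h y = 0) → ∀ y ∈ W₁ ∩ C, Φ y = 0 → h y = 0 := by
  obtain ⟨κ, hκ⟩ := exists_isRetractionAt hΦ h0 hv
  obtain ⟨ρ, hρ, hball⟩ := Metric.eventually_nhds_iff_ball.1
    ((hκ.eventually_apply_eq_zero.and hκ.eventually_eq_zero).and
      (hκ.analyticAt.eventually_analyticAt.and (hκ.tendsto.eventually hW₀)))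
  refine ⟨_, Metric.ball_mem_nhds y₀ hρ, fun C hconv hcyl h hh y₁ hy₁ hΦ₁ hzero y hy hΦy => ?_⟩
  have han : AnalyticOnNhd ℂ (fun y => h (y + κ y • v)) (Metric.ball y₀ ρ ∩ C) := fun y hy =>
    have hy' := (hball y hy.1).2
    IsRetractionAt.analyticAt_comp hy'.1 (hh _ ⟨hy'.2, hcyl y hy.2 _⟩)
  have hκ₁ : κ y₁ = 0 := (hball y₁ hy₁.1).1.2 hΦ₁
  have hnear : (fun y => h (y + κ y • v)) =ᶠ[𝓝 y₁] 0 := by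
    have hretr : Tendsto (fun y => y + κ y • v) (𝓝 y₁) (𝓝 y₁) := by
      simpa [hκ₁] using continuousAt_id.tendsto.add
        ((hball y₁ hy₁.1).2.1.continuousAt.tendsto.smul_const v)
    filter_upwards [hretr.eventually hzero, Metric.isOpen_ball.mem_nhds hy₁.1] with y hy hyball
    exact hy (hball y hyball).1.1
  have heq := han.eqOn_zero_of_preconnected_of_eventuallyEq_zero
    ((convex_ball y₀ ρ).inter hconv).isPreconnected hy₁ hnear
  simpa [(hball y hy.1).1.2 hΦy] using heq hy

lemma eqOn_ball_zero_of_real {h : ℂ → ℂ} {r : ℝ} (hr : 0 < r)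
    (han : AnalyticOnNhd ℂ h (Metric.ball 0 r))
    (hreal : ∀ t : ℝ, (t : ℂ) ∈ Metric.ball 0 r → h t = 0) : Set.EqOn h 0 (Metric.ball 0 r) := by
  have hofReal : Tendsto (fun t : ℝ => (t : ℂ)) (𝓝[≠] 0) (𝓝[≠] 0) := by
    refine tendsto_nhdsWithin_iff.2 ⟨?_, ?_⟩
    · simpa using (Complex.continuous_ofReal.tendsto 0).mono_left nhdsWithin_le_nhds
    · filter_upwards [self_mem_nhdsWithin] with t ht using by simpa using ht
  have hfreq : ∃ᶠ s in 𝓝[≠] (0 : ℂ), h s = 0 := by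
    refine hofReal.frequently (Eventually.frequently ?_)
    filter_upwards [hofReal.eventually (nhdsWithin_le_nhds (Metric.ball_mem_nhds 0 hr))]
      with t ht using hreal t ht
  exact han.eqOn_zero_of_preconnected_of_frequently_eq_zero
    (convex_ball (0 : ℂ) r).isPreconnected (Metric.mem_ball_self hr) hfreq

/-- Write `y = y₀ + a + i b` with `a` and `b` real; then `s ↦ g (y₀ + a + s b)` vanishes for small
real `s`, hence at `s = i`. -/
lemma eventually_eq_zero_of_real {c : Y →L⋆[ℂ] Y} (hinvol : ∀ y, c (c y) = y) (hy₀ : c y₀ = y₀)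
    {g : Y → ℂ} (hg : AnalyticAt ℂ g y₀) (hreal : ∀ᶠ y in 𝓝 y₀, c y = y → g y = 0) :
    ∀ᶠ y in 𝓝 y₀, g y = 0 := by
  obtain ⟨ρ, hρ, hball⟩ := Metric.eventually_nhds_iff_ball.1 (hreal.and hg.eventually_analyticAt)
  let a : Y → Y := fun y => (2 : ℂ)⁻¹ • (y - y₀ + c (y - y₀))
  let b : Y → Y := fun y => (2 * Complex.I)⁻¹ • (y - y₀ - c (y - y₀))
  have hca : ∀ y, c (a y) = a y := fun y => by
    simp only [a, map_smulₛₗ, map_add, hinvol, map_inv₀, Complex.conj_ofNat, add_comm]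
  have hcb : ∀ y, c (b y) = b y := fun y => by
    have hconj : starRingEnd ℂ (2 * Complex.I)⁻¹ = -(2 * Complex.I)⁻¹ := by
      simp [Complex.conj_ofNat]
    rw [map_smulₛₗ, map_sub, hinvol, hconj, neg_smul, ← smul_neg, neg_sub]
  have hab : ∀ y, y₀ + (a y + Complex.I • b y) = y := fun y => by
    simp only [a, b]
    match_scalars <;> field_simp <;> ring
  have hsmall : ∀ᶠ y in 𝓝 y₀, ‖a y‖ + 2 * ‖b y‖ < ρ := by
    have hcont : Continuous fun y => ‖a y‖ + 2 * ‖b y‖ := by fun_prop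
    exact hcont.tendsto y₀ |>.eventually (gt_mem_nhds (by simpa [a, b] using hρ))
  filter_upwards [hsmall] with y hy
  let line : ℂ → Y := fun s => y₀ + (a y + s • b y)
  have hline : ∀ s ∈ Metric.ball (0 : ℂ) 2, line s ∈ Metric.ball y₀ ρ := fun s hs => by
    rw [mem_ball_zero_iff] at hs
    rw [mem_ball_iff_norm, add_sub_cancel_left]
    calc ‖a y + s • b y‖ ≤ ‖a y‖ + ‖s‖ * ‖b y‖ := by
          rw [← norm_smul]; exact norm_add_le _ _
      _ ≤ ‖a y‖ + 2 * ‖b y‖ := by gcongr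
      _ < ρ := hy
  have han : AnalyticOnNhd ℂ (fun s => g (line s)) (Metric.ball 0 2) := fun s hs =>
    (hball _ (hline s hs)).2.fun_comp
      (analyticAt_const.add (analyticAt_const.add (analyticAt_id.smul analyticAt_const)))
  have hzero := eqOn_ball_zero_of_real two_pos han
    (fun t ht => (hball _ (hline t ht)).1
      (by simp only [line, map_add, map_smulₛₗ, hy₀, hca, hcb, Complex.conj_ofReal]))
    (show Complex.I ∈ Metric.ball 0 2 by simp)
  simpa [line, hab] using hzero

lemma IsRetractionAt.eventually_map_eq {κ : Y → ℂ} (hκ : IsRetractionAt Φ y₀ v κ)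
    {c : Y →L⋆[ℂ] Y} (hv : c v = v) (hΦ : ∀ᶠ y in 𝓝 y₀, Φ (c y) = star (Φ y)) :
    ∀ᶠ y in 𝓝 y₀, c y = y → c (y + κ y • v) = y + κ y • v := by
  have hstar : Tendsto (fun y => (y, star (κ y))) (𝓝 y₀) (𝓝 (y₀, 0)) := by
    simpa [hκ.apply_self] using
      continuousAt_id.tendsto.prodMk_nhds hκ.analyticAt.continuousAt.tendsto.star
  filter_upwards [hκ.eventually_apply_eq_zero, hκ.tendsto.eventually hΦ,
    hstar.eventually hκ.eventually_iff] with y hzero hconj hiff hy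
  have hc : c (y + κ y • v) = y + star (κ y) • v := by simp [hy, hv]
  rw [hc, ← hiff.1 (by rw [← hc, hconj, hzero, star_zero])]

lemma eventually_eq_zero_on_of_real [CompleteSpace Y] (hΦ : AnalyticAt ℂ Φ y₀) (h0 : Φ y₀ = 0)
    (hv : fderiv ℂ Φ y₀ v ≠ 0) {c : Y →L⋆[ℂ] Y} (hinvol : ∀ y, c (c y) = y) (hcy : c y₀ = y₀)
    (hcv : c v = v) (hΦc : ∀ᶠ y in 𝓝 y₀, Φ (c y) = star (Φ y)) {h : Y → ℂ}
    (hh : AnalyticAt ℂ h y₀) (hreal : ∀ᶠ y in 𝓝 y₀, c y = y → Φ y = 0 → h y = 0) :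
    ∀ᶠ y in 𝓝 y₀, Φ y = 0 → h y = 0 := by
  obtain ⟨κ, hκ⟩ := exists_isRetractionAt hΦ h0 hv
  have hzero : ∀ᶠ y in 𝓝 y₀, h (y + κ y • v) = 0 := by
    refine eventually_eq_zero_of_real hinvol hcy
      (IsRetractionAt.analyticAt_comp hκ.analyticAt (by simpa [hκ.apply_self] using hh)) ?_
    filter_upwards [hκ.eventually_map_eq hcv hΦc, hκ.eventually_apply_eq_zero,
      hκ.tendsto.eventually hreal] with y hmap hΦy hhy hy
    exact hhy (hmap hy) hΦy
  filter_upwards [hzero, hκ.eventually_eq_zero] with y hy hκy hΦy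
  simpa [hκy hΦy] using hy

lemma eq_of_fderiv_segment_eq_zero {f : Y → ℂ} {y y' : Y}
    (hf : ∀ x ∈ segment ℝ y y', DifferentiableAt ℂ f x ∧ fderiv ℂ f x (y' - y) = 0) :
    f y = f y' := by
  have hderiv : ∀ s ∈ Set.Icc (0 : ℝ) 1,
      HasDerivAt (fun s : ℝ => f (AffineMap.lineMap y y' s)) 0 s := fun s hs => by
    obtain ⟨hdiff, hzero⟩ := hf (AffineMap.lineMap y y' s) (lineMap_mem_segment ℝ y y' hs)
    rw [← hzero]
    exact (hdiff.hasFDerivAt.restrictScalars ℝ).comp_hasDerivAt s AffineMap.hasDerivAt_lineMap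
  have hconst := constant_of_has_deriv_right_zero
    (fun s hs => (hderiv s hs).continuousAt.continuousWithinAt)
    (fun s hs => (hderiv s ⟨hs.1, hs.2.le⟩).hasDerivWithinAt) 1 ⟨zero_le_one, le_rfl⟩
  simpa using hconst.symm

lemma exists_nhds_eq_of_map_eq [CompleteSpace Y] {E : Type*} [NormedAddCommGroup E]
    [NormedSpace ℂ E] {q : Y → ℂ} (hΦ : AnalyticAt ℂ Φ y₀) (h0 : Φ y₀ = 0)
    (hv : fderiv ℂ Φ y₀ v ≠ 0) (hq : AnalyticAt ℂ q y₀) (π : Y →L[ℂ] E) (hπ : π v = 0)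
    (hd : ∀ᶠ y in 𝓝 y₀, Φ y = 0 → ∀ u, π u = 0 → fderiv ℂ Φ y u = 0 → fderiv ℂ q y u = 0) :
    ∃ U ∈ 𝓝 y₀, ∀ y ∈ U, ∀ y' ∈ U, Φ y = 0 → Φ y' = 0 → π y = π y' → q y = q y' := by
  obtain ⟨κ, hκ⟩ := exists_isRetractionAt hΦ h0 hv
  have hkill : ∀ᶠ y in 𝓝 y₀, DifferentiableAt ℂ (fun y => q (y + κ y • v)) y ∧
      ∀ u, π u = 0 → fderiv ℂ (fun y => q (y + κ y • v)) y u = 0 := by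
    filter_upwards [hκ.eventually_apply_eq_zero.eventually_nhds,
      hκ.analyticAt.eventually_analyticAt, hκ.tendsto.eventually
        (hd.and (hq.eventually_analyticAt.and hΦ.eventually_analyticAt))]
      with y hΦy hκy ⟨hdy, hqy, hΦan⟩
    have hretr : HasFDerivAt (fun y => y + κ y • v)
        (.id ℂ Y + (fderiv ℂ κ y).smulRight v) y :=
      (hasFDerivAt_id y).add (hκy.differentiableAt.hasFDerivAt.smul_const v)
    have hqretr := hqy.differentiableAt.hasFDerivAt.comp y hretr
    have hΦretr := hΦan.differentiableAt.hasFDerivAt.comp y hretr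
    have hΦzero : HasFDerivAt (Φ ∘ fun y => y + κ y • v) (0 : Y →L[ℂ] ℂ) y :=
      (hasFDerivAt_const (0 : ℂ) y).congr_of_eventuallyEq hΦy
    refine ⟨hqretr.differentiableAt, fun u hu => ?_⟩
    have htangent := DFunLike.congr_fun (hΦretr.unique hΦzero) u
    exact (DFunLike.congr_fun hqretr.fderiv u).trans
      (hdy hΦy.self_of_nhds _ (by simp [hu, hπ]) htangent)
  obtain ⟨ρ, hρ, hball⟩ := Metric.eventually_nhds_iff_ball.1 (hkill.and hκ.eventually_eq_zero)
  refine ⟨_, Metric.ball_mem_nhds y₀ hρ, fun y hy y' hy' hΦy hΦy' hπy => ?_⟩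
  have heq := eq_of_fderiv_segment_eq_zero fun x hx =>
    have hx' := (hball x ((convex_ball y₀ ρ).segment_subset hy hy' hx)).1
    ⟨hx'.1, hx'.2 (y' - y) (by simp [hπy])⟩
  simpa [(hball y hy).2 hΦy, (hball y' hy').2 hΦy'] using heq

end Continuation

/-! ### Connectedness of the punctured cone -/

section Cone

/-- The punctured cone `{p(z) + q(w) = 0} \ {0}`, the part of the exceptional divisor met by the
strict transform of a hypersurface with leading form `p(z) + q(w)`. -/
def puncturedCone {V : Type*} [Zero V] (p q : V → ℂ) : Set (V × V) :=
  {ξ | ξ ≠ 0 ∧ p ξ.1 + q ξ.2 = 0}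

lemma exists_first_zero {g : ℝ → ℂ} (hg : Continuous g) (h0 : g 0 ≠ 0) (h1 : g 1 = 0) :
    ∃ u > 0, g u = 0 ∧ ∀ t ∈ Set.Ico 0 u, g t ≠ 0 := by
  have hcompact : IsCompact {t ∈ Set.Icc (0 : ℝ) 1 | g t = 0} :=
    isCompact_Icc.inter_right (isClosed_eq hg continuous_const)
  obtain ⟨u, ⟨⟨hu0, hu1⟩, hgu⟩, hmin⟩ := hcompact.exists_isLeast ⟨1, by simp [h1]⟩
  refine ⟨u, hu0.lt_of_ne (by rintro rfl; exact h0 hgu), hgu, fun t ht hgt => ?_⟩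
  exact ht.2.not_ge (hmin ⟨⟨ht.1, ht.2.le.trans hu1⟩, hgt⟩)

lemma continuousWithinAt_of_pow {X : Type*} [TopologicalSpace X] {f g : X → ℂ} {k : ℕ} (hk : k ≠ 0)
    (hfg : ∀ x, f x ^ k = g x) {s : Set X} {x : X} (hg : ContinuousWithinAt g s x) (h0 : g x = 0) :
    ContinuousWithinAt f s x := by
  have hfx : f x = 0 := eq_zero_of_pow_eq_zero ((hfg x).trans h0)
  have hroot : Tendsto (fun y => ‖g y‖ ^ (k : ℝ)⁻¹) (𝓝[s] x) (𝓝 0) := by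
    simpa [h0, hk] using (hg.norm.rpow_const (p := (k : ℝ)⁻¹) (Or.inr (by positivity))).tendsto
  rw [ContinuousWithinAt, hfx, tendsto_zero_iff_norm_tendsto_zero]
  refine hroot.congr fun y => ?_
  rw [← hfg, norm_pow, Real.pow_rpow_inv_natCast (norm_nonneg _) hk]

/-- The root is followed up to the first zero of `g`. -/
lemma exists_continuousOn_pow_eq_until_zero {g : ℝ → ℂ} (hg : Continuous g) (h0 : g 0 = 1)
    (h1 : g 1 = 0) {k : ℕ} (hk : k ≠ 0) :
    ∃ u > 0, g u = 0 ∧ ∃ f : ℝ → ℂ, ContinuousOn f (Set.Icc 0 u) ∧ f 0 = 1 ∧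
      ∀ t ∈ Set.Icc 0 u, f t ^ k = g t := by
  obtain ⟨u, hu, hgu, hne⟩ := exists_first_zero hg (by simp [h0]) h1
  have hsimply : IsSimplyConnected (Set.Ioo (-u) u) :=
    have := (convex_Ioo (-u) u).contractibleSpace ⟨0, by simpa⟩
    SimplyConnectedSpace.ofContractible _
  obtain ⟨f, hf, hfg⟩ := Complex.exists_continuousOn_pow_eq (g := fun t => g |t|)
    hsimply isOpen_Ioo
    (hg.comp continuous_abs).continuousOn
    (by rintro ⟨t, ht, hgt⟩; exact hne |t| ⟨abs_nonneg t, abs_lt.2 ht⟩ hgt) hk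
  have hf0 : f 0 ^ k = 1 := by simp [hfg, h0]
  have hf0' : f 0 ≠ 0 := fun h => by simp [h, hk] at hf0
  refine ⟨u, hu, hgu, fun t => f t / f 0, ContinuousOn.div_const (fun t ht => ?_) _,
    div_self hf0', fun t ht => by rw [div_pow, hf0, div_one, hfg, abs_of_nonneg ht.1]⟩
  rcases ht.2.eq_or_lt with rfl | htu
  · exact continuousWithinAt_of_pow hk hfg (hg.comp continuous_abs).continuousWithinAt
      (by simp [abs_of_nonneg ht.1, hgu])
  · exact (hf.continuousAt (Ioo_mem_nhds (by linarith [ht.1]) htu)).continuousWithinAt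

lemma joinedIn_puncturedCone_swap {V : Type*} [NormedAddCommGroup V] {p q : V → ℂ} {ξ ξ' : V × V}
    (h : JoinedIn (puncturedCone p q) ξ ξ') :
    JoinedIn (puncturedCone q p) ξ.swap ξ'.swap :=
  (h.map continuous_swap).mono <| by
    rintro _ ⟨ξ, hξ, rfl⟩
    exact ⟨fun h => hξ.1 (Prod.swap_injective h), (add_comm _ _).trans hξ.2⟩

variable {V : Type*} [NormedAddCommGroup V] [NormedSpace ℂ V] {k : ℕ} {p q : V → ℂ}

lemma IsIsolatedForm.continuous (hp : IsIsolatedForm k p) : Continuous p :=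
  continuous_iff_continuousAt.2 fun z => (hp.analyticAt z).continuousAt

lemma IsIsolatedForm.smul_eq_zero (hp : IsIsolatedForm k p) {z : V} (hz : p z = 0) (s : ℂ) :
    p (s • z) = 0 := by
  rw [hp.map_smul, hz, mul_zero]

lemma joinedIn_puncturedCone_left (hp : IsIsolatedForm k p) {z z' w : V} (hz : p z = 0)
    (hz' : p z' = 0) (hw : q w = 0) (hw0 : w ≠ 0) :
    JoinedIn (puncturedCone p q) (z, w) (z', w) := by
  have toZero : ∀ z, p z = 0 → JoinedIn (puncturedCone p q) (0, w) (z, w) := fun z hz =>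
    .ofLine (f := fun t : ℝ => ((t : ℂ) • z, w)) (by fun_prop) (by simp) (by simp) <| by
      rintro _ ⟨t, -, rfl⟩
      exact ⟨by simp [hw0], by rw [hp.smul_eq_zero hz, hw, add_zero]⟩
  exact (toZero z hz).symm.trans (toZero z' hz')

lemma joinedIn_puncturedCone_of_eq_zero (hp : IsIsolatedForm k p) (hq : IsIsolatedForm k q)
    {z w m : V} (hzw : (z, w) ≠ 0) (hz : p z = 0) (hw : q w = 0) (hm0 : m ≠ 0) (hm : q m = 0) :
    JoinedIn (puncturedCone p q) (z, w) (0, m) := by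
  obtain ⟨l, hl0, hl⟩ := hp.exists_zero
  have right : ∀ {z w w'}, z ≠ 0 → p z = 0 → q w = 0 → q w' = 0 →
      JoinedIn (puncturedCone p q) (z, w) (z, w') := fun hz0 hz hw hw' =>
    joinedIn_puncturedCone_swap (joinedIn_puncturedCone_left hq hw hw' hz hz0)
  have fromLeft : ∀ {z w}, z ≠ 0 → p z = 0 → q w = 0 →
      JoinedIn (puncturedCone p q) (z, w) (0, m) := fun hz0 hz hw =>
    (right hz0 hz hw hm).trans (joinedIn_puncturedCone_left hp hz hp.apply_zero hm hm0)
  by_cases hz0 : z = 0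
  · have hw0 : w ≠ 0 := by rintro rfl; exact hzw (by simp [hz0])
    exact (joinedIn_puncturedCone_left hp hz hl hw hw0).trans (fromLeft hl0 hl hw)
  · exact fromLeft hz0 hz hw

lemma IsIsolatedForm.lineMap_ne_zero (hq : IsIsolatedForm k q) {w m : V} (hw : q w ≠ 0)
    (hm : q m = 0) (hm0 : m ≠ 0) (t : ℝ) : AffineMap.lineMap w m t ≠ 0 := by
  intro h
  rw [AffineMap.lineMap_apply_module, ← Complex.coe_smul, ← Complex.coe_smul,
    add_eq_zero_iff_eq_neg, ← neg_smul] at h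
  have hq1 : (((1 - t : ℝ) : ℂ)) ^ k * q w = 0 := by
    rw [← hq.map_smul, h, hq.smul_eq_zero hm]
  obtain rfl : t = 1 := by
    have := eq_zero_of_pow_eq_zero ((mul_eq_zero.1 hq1).resolve_right hw)
    norm_cast at this
    linarith
  simp [hm0] at h

/-- A point `(z, w)` with `p z ≠ 0` moves to `p = q = 0` by sending `w` along the segment to `m` and
multiplying `z` by a `k`-th root of `q (w + t (m - w)) / q w`. -/
lemma exists_joinedIn_puncturedCone (hp : IsIsolatedForm k p) (hq : IsIsolatedForm k q) {z w m : V}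
    (hzw : (z, w) ∈ puncturedCone p q) (hw : q w ≠ 0) (hm0 : m ≠ 0) (hm : q m = 0) :
    ∃ w' ≠ 0, q w' = 0 ∧ JoinedIn (puncturedCone p q) (z, w) (0, w') := by
  let W : ℝ → V := AffineMap.lineMap w m
  have hW : Continuous W := AffineMap.lineMap_continuous
  have hW0 : ∀ t, W t ≠ 0 := hq.lineMap_ne_zero hw hm hm0
  obtain ⟨u, hu, hgu, f, hf, hf0, hfg⟩ :=
    exists_continuousOn_pow_eq_until_zero (g := fun t => q (W t) / q w)
      ((hq.continuous.comp hW).div_const _) (by simp [W, hw]) (by simp [W, hm]) hp.pos.ne'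
  have hfu : f u = 0 := eq_zero_of_pow_eq_zero ((hfg u ⟨hu.le, le_rfl⟩).trans hgu)
  have hmaps : Set.MapsTo (fun t => u * t) (Set.Icc 0 1) (Set.Icc 0 u) := fun t ht =>
    ⟨mul_nonneg hu.le ht.1, mul_le_of_le_one_right hu.le ht.2⟩
  refine ⟨W u, hW0 u, by simpa [hw] using hgu, .ofLine (f := fun t => (f (u * t) • z, W (u * t)))
    ?_ (by simp [hf0, W]) (by simp [hfu]) ?_⟩
  · exact ((hf.comp (by fun_prop) hmaps).smul continuousOn_const).prodMk
      (hW.comp (by fun_prop)).continuousOn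
  · rintro _ ⟨t, ht, rfl⟩
    refine ⟨fun h => hW0 _ (congrArg Prod.snd h), ?_⟩
    rw [hp.map_smul, hfg _ (hmaps ht), eq_neg_of_add_eq_zero_left hzw.2]
    field_simp
    ring

lemma isPathConnected_puncturedCone (hp : IsIsolatedForm k p) (hq : IsIsolatedForm k q) :
    IsPathConnected (puncturedCone p q) := by
  obtain ⟨m, hm0, hm⟩ := hq.exists_zero
  refine ⟨(0, m), ⟨by simp [hm0], by simp [hp.apply_zero, hm]⟩, fun {ξ} hξ => JoinedIn.symm ?_⟩
  obtain ⟨z, w⟩ := ξ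
  by_cases hw : q w = 0
  · exact joinedIn_puncturedCone_of_eq_zero hp hq hξ.1 (by simpa [hw] using hξ.2) hw hm0 hm
  · obtain ⟨w', hw'0, hw', hjoin⟩ := exists_joinedIn_puncturedCone hp hq hξ hw hm0 hm
    exact hjoin.trans <|
      joinedIn_puncturedCone_of_eq_zero hp hq (by simp [hw'0]) hp.apply_zero hw' hm0 hm

end Cone

/-! ### The strict transform of a polarized hypersurface -/

section PartialDerivatives

variable {V : Type*} [NormedAddCommGroup V] [NormedSpace ℂ V] {F : V × V → ℂ} {ξ : V × V}

/-- The partial derivative of `F` at `ξ` in the first variable. -/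
noncomputable def fderivFst (F : V × V → ℂ) (ξ : V × V) : V →L[ℂ] ℂ :=
  (fderiv ℂ F ξ).comp (.inl ℂ V V)

/-- The partial derivative of `F` at `ξ` in the second variable. -/
noncomputable def fderivSnd (F : V × V → ℂ) (ξ : V × V) : V →L[ℂ] ℂ :=
  (fderiv ℂ F ξ).comp (.inr ℂ V V)

/-- The mixed second derivative `∂_z ∂_w F` at `ξ`; its first argument is the `z`-direction. -/
noncomputable def mixedHessian (F : V × V → ℂ) (ξ : V × V) : V →L[ℂ] V →L[ℂ] ℂ :=
  ((fderiv ℂ (fderiv ℂ F) ξ).comp (.inr ℂ V V)).flip.comp (.inl ℂ V V)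

/-- The polarized Levi form of `F`: the mixed Hessian evaluated at the vectors
`∂_z F(a) b - ∂_z F(b) a` and `∂_w F(a') b' - ∂_w F(b') a'`, which span the kernels of the two
partial derivatives. -/
noncomputable def polarLevi (F : V × V → ℂ) (a b a' b' : V) (ξ : V × V) : ℂ :=
  mixedHessian F ξ (fderivFst F ξ a • b - fderivFst F ξ b • a)
    (fderivSnd F ξ a' • b' - fderivSnd F ξ b' • a')

lemma analyticAt_fderivFst (hF : AnalyticAt ℂ F ξ) (a : V) :
    AnalyticAt ℂ (fun x => fderivFst F x a) ξ :=
  ((ContinuousLinearMap.apply ℂ ℂ (a, (0 : V))).analyticAt _).fun_comp hF.fderiv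

lemma analyticAt_fderivSnd (hF : AnalyticAt ℂ F ξ) (b : V) :
    AnalyticAt ℂ (fun x => fderivSnd F x b) ξ :=
  ((ContinuousLinearMap.apply ℂ ℂ ((0 : V), b)).analyticAt _).fun_comp hF.fderiv

lemma fderiv_fderivFst (hF : AnalyticAt ℂ F ξ) (a b : V) :
    fderiv ℂ (fun x => fderivFst F x a) ξ (0, b) = mixedHessian F ξ a b := by
  have hd : HasFDerivAt (fun x => fderivFst F x a)
      ((ContinuousLinearMap.apply ℂ ℂ (a, (0 : V))).comp (fderiv ℂ (fderiv ℂ F) ξ)) ξ :=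
    (ContinuousLinearMap.apply ℂ ℂ (a, (0 : V))).hasFDerivAt.comp ξ
      hF.fderiv.differentiableAt.hasFDerivAt
  rw [hd.fderiv]
  rfl

lemma analyticAt_mixedHessian (hF : AnalyticAt ℂ F ξ) (a b : V) :
    AnalyticAt ℂ (fun x => mixedHessian F x a b) ξ :=
  ((ContinuousLinearMap.apply ℂ ℂ (a, (0 : V))).analyticAt _).fun_comp
    (((ContinuousLinearMap.apply ℂ _ ((0 : V), b)).analyticAt _).fun_comp hF.fderiv.fderiv)

lemma analyticAt_polarLevi (hF : AnalyticAt ℂ F ξ) (a b a' b' : V) :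
    AnalyticAt ℂ (polarLevi F a b a' b') ξ := by
  have hz := analyticAt_fderivFst hF
  have hw := analyticAt_fderivSnd hF
  have hzw := analyticAt_mixedHessian hF
  unfold polarLevi
  simp only [map_sub, map_smul, sub_apply, smul_apply, smul_eq_mul]
  exact ((hz a).mul (((hw a').mul (hzw b b')).sub ((hw b').mul (hzw b a')))).sub
    ((hz b).mul (((hw a').mul (hzw a b')).sub ((hw b').mul (hzw a a')))) |>.congr
      (.of_forall fun x => by simp; ring)

end PartialDerivatives

/-- Near the point `(0, ξ)` of the exceptional divisor, `G` vanishes on the strict transform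
`{Φ = 0}`, points of the blow-up of the origin being written as `(r, ξ)` over `r ξ`. -/
def VanishesNear {V : Type*} [NormedAddCommGroup V] [NormedSpace ℂ V] (Φ : ℂ × V × V → ℂ)
    (G : V × V → ℂ) (ξ : V × V) : Prop :=
  ∀ᶠ y in 𝓝 ((0 : ℂ), ξ), Φ y = 0 → G (y.1 • y.2) = 0

lemma analyticAt_comp_smul {V : Type*} [NormedAddCommGroup V] [NormedSpace ℂ V] {G : V → ℂ}
    {y : ℂ × V} (hG : AnalyticAt ℂ G (y.1 • y.2)) :
    AnalyticAt ℂ (fun y : ℂ × V => G (y.1 • y.2)) y :=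
  AnalyticAt.fun_comp (f := fun y : ℂ × V => y.1 • y.2) hG (analyticAt_fst.smul analyticAt_snd)

/-- `F` has leading form `p(z) + q(w)` of degree `k` at the origin, and `Φ(r, ξ) = F(r ξ) / r ^ k`
is its strict transform. -/
structure IsStrictTransform {V : Type*} [NormedAddCommGroup V] [NormedSpace ℂ V] (k : ℕ)
    (p q : V → ℂ) (F : V × V → ℂ) (Φ : ℂ × V × V → ℂ) : Prop where
  left : IsIsolatedForm k p
  right : IsIsolatedForm k q
  analyticAt : AnalyticAt ℂ F 0
  analyticAt_transform : ∀ ξ, AnalyticAt ℂ Φ (0, ξ)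
  eventually_eq : ∀ ξ, ∀ᶠ y in 𝓝 ((0 : ℂ), ξ), F (y.1 • y.2) = y.1 ^ k * Φ y
  apply_zero : ∀ ξ, Φ (0, ξ) = p ξ.1 + q ξ.2

namespace IsStrictTransform

section Basic

variable {V : Type*} [NormedAddCommGroup V] [NormedSpace ℂ V] {k : ℕ} {p q : V → ℂ}
  {F : V × V → ℂ} {Φ : ℂ × V × V → ℂ}

lemma fderiv_zero (S : IsStrictTransform k p q F Φ) (ξ η : V × V) :
    fderiv ℂ Φ (0, ξ) (0, η) = fderiv ℂ p ξ.1 η.1 + fderiv ℂ q ξ.2 η.2 := by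
  have hΦ : HasFDerivAt (fun x => Φ (0, x))
      ((fderiv ℂ Φ (0, ξ)).comp (.inr ℂ ℂ (V × V))) ξ :=
    (S.analyticAt_transform ξ).differentiableAt.hasFDerivAt.comp ξ (hasFDerivAt_prodMk_right 0 ξ)
  have hpq : HasFDerivAt (fun x : V × V => p x.1 + q x.2)
      ((fderiv ℂ p ξ.1).comp (.fst ℂ V V) + (fderiv ℂ q ξ.2).comp (.snd ℂ V V)) ξ :=
    ((S.left.analyticAt ξ.1).differentiableAt.hasFDerivAt.comp ξ hasFDerivAt_fst).add
      ((S.right.analyticAt ξ.2).differentiableAt.hasFDerivAt.comp ξ hasFDerivAt_snd)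
  rw [funext S.apply_zero] at hΦ
  simpa using DFunLike.congr_fun (hΦ.unique hpq) η

lemma exists_fderiv_ne_zero (S : IsStrictTransform k p q F Φ) {ξ : V × V} (hξ : ξ ≠ 0) :
    ∃ η, fderiv ℂ Φ (0, ξ) (0, η) ≠ 0 := by
  rcases eq_or_ne ξ.1 0 with hz | hz
  · obtain ⟨u, hu⟩ := S.right.exists_fderiv_ne_zero ξ.2 fun hw => hξ (Prod.ext hz hw)
    exact ⟨(0, u), by simpa [S.fderiv_zero] using hu⟩
  · obtain ⟨u, hu⟩ := S.left.exists_fderiv_ne_zero ξ.1 hz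
    exact ⟨(u, 0), by simpa [S.fderiv_zero] using hu⟩

lemma eq_zero_of_mem_puncturedCone (S : IsStrictTransform k p q F Φ) {ξ : V × V}
    (hξ : ξ ∈ puncturedCone p q) : Φ (0, ξ) = 0 := by
  rw [S.apply_zero, hξ.2]

lemma eventually_analyticAt (S : IsStrictTransform k p q F Φ) (ξ : V × V) :
    ∀ᶠ y in 𝓝 ((0 : ℂ), ξ), AnalyticAt ℂ F (y.1 • y.2) :=
  (tendsto_smul_zero_nhds ξ).eventually S.analyticAt.eventually_analyticAt

lemma eventually_eq_zero (S : IsStrictTransform k p q F Φ) (ξ : V × V) :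
    ∀ᶠ y in 𝓝 ((0 : ℂ), ξ), Φ y = 0 → F (y.1 • y.2) = 0 := by
  filter_upwards [S.eventually_eq ξ] with y hy hΦ
  rw [hy, hΦ, mul_zero]

lemma eventually_fderiv_ne_zero (S : IsStrictTransform k p q F Φ) {ξ η : V × V}
    (hη : fderiv ℂ Φ (0, ξ) (0, η) ≠ 0) :
    ∀ᶠ y in 𝓝 ((0 : ℂ), ξ), y.1 ≠ 0 → fderiv ℂ F (y.1 • y.2) η ≠ 0 := by
  have hΦη : ContinuousAt (fun y => fderiv ℂ Φ y (0, η)) (0, ξ) :=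
    (S.analyticAt_transform ξ).fderiv.continuousAt.clm_apply continuousAt_const
  filter_upwards [(S.eventually_eq ξ).eventually_nhds, S.eventually_analyticAt ξ,
    (S.analyticAt_transform ξ).eventually_analyticAt, hΦη.eventually_ne hη]
    with ⟨r, x⟩ hrel hF hΦ hne hr hzero
  have hleft : HasFDerivAt (fun x => F (r • x))
      ((fderiv ℂ F (r • x)).comp (r • ContinuousLinearMap.id ℂ (V × V))) x :=
    hF.differentiableAt.hasFDerivAt.comp x ((hasFDerivAt_id x).const_smul r)
  have hright : HasFDerivAt (fun x => r ^ k * Φ (r, x))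
      (r ^ k • (fderiv ℂ Φ (r, x)).comp (.inr ℂ ℂ (V × V))) x :=
    (hΦ.differentiableAt.hasFDerivAt.comp x (hasFDerivAt_prodMk_right r x)).const_mul _
  have hslice : ∀ᶠ x' in 𝓝 x, F (r • x') = r ^ k * Φ (r, x') :=
    (Continuous.prodMk_right r).continuousAt.eventually hrel
  have heq := DFunLike.congr_fun (hleft.unique (hright.congr_of_eventuallyEq hslice)) η
  simp only [ContinuousLinearMap.comp_apply, smul_apply, ContinuousLinearMap.id_apply, map_smul,
    ContinuousLinearMap.inr_apply, hzero, smul_zero] at heq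
  exact smul_ne_zero (pow_ne_zero k hr) hne heq.symm

lemma eventually_descend (S : IsStrictTransform k p q F Φ) {ξ : V × V} {Q : V × V → Prop}
    (hQ : ∀ᶠ y in 𝓝 ((0 : ℂ), ξ), Φ y = 0 → Q (y.1 • y.2)) :
    ∀ᶠ y in 𝓝 ((0 : ℂ), ξ), y.1 ≠ 0 → ∀ᶠ x in 𝓝 (y.1 • y.2), F x = 0 → Q x := by
  filter_upwards [(S.eventually_eq ξ).eventually_nhds, hQ.eventually_nhds] with ⟨r, x⟩ hrel hQ hr
  have hscale : Tendsto (fun x' => (r, r⁻¹ • x')) (𝓝 (r • x)) (𝓝 (r, x)) := by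
    have hcont : Continuous fun x' : V × V => (r, r⁻¹ • x') := by fun_prop
    simpa only [inv_smul_smul₀ hr] using hcont.tendsto (r • x)
  filter_upwards [hscale.eventually hrel, hscale.eventually hQ] with x' hrel' hQ' hFx
  simp only [smul_inv_smul₀ hr, hFx] at hrel' hQ'
  exact hQ' ((mul_eq_zero.1 hrel'.symm).resolve_left (pow_ne_zero k hr))

end Basic

section Propagation

variable {V : Type*} [NormedAddCommGroup V] [NormedSpace ℂ V] [CompleteSpace V] {k : ℕ}
  {p q : V → ℂ} {F : V × V → ℂ} {Φ : ℂ × V × V → ℂ}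

/-- The neighbourhood on which the vanishing propagates is the same for all functions `G`. -/
lemma exists_nhds_forall_eq_zero (S : IsStrictTransform k p q F Φ) {ξ : V × V}
    (hξ : ξ ∈ puncturedCone p q) {A : Set (V × V)} (hA : A ∈ 𝓝 0) :
    ∃ W ∈ 𝓝 ((0 : ℂ), ξ), ∀ G : V × V → ℂ, (∀ x ∈ A, AnalyticAt ℂ G x) →
      ∀ ξ', (0, ξ') ∈ W → ξ' ∈ puncturedCone p q → VanishesNear Φ G ξ' →
      ∀ y ∈ W, Φ y = 0 → G (y.1 • y.2) = 0 := by
  obtain ⟨η, hη⟩ := S.exists_fderiv_ne_zero hξ.1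
  obtain ⟨W, hW, hcont⟩ := exists_nhds_continuation (S.analyticAt_transform ξ)
    (S.eq_zero_of_mem_puncturedCone hξ) hη ((tendsto_smul_zero_nhds ξ).eventually hA)
  refine ⟨W, hW, fun G hG ξ' hξ'W hξ' hvan y hy hΦy => ?_⟩
  exact hcont Set.univ convex_univ (fun _ _ _ => trivial) (fun y => G (y.1 • y.2))
    (fun y hy => analyticAt_comp_smul (hG _ hy.1)) (0, ξ')
    ⟨hξ'W, trivial⟩ (S.eq_zero_of_mem_puncturedCone hξ') hvan y ⟨hy, trivial⟩ hΦy

lemma vanishesNear_of_mem_puncturedCone (S : IsStrictTransform k p q F Φ) {G : V × V → ℂ}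
    (hG : AnalyticAt ℂ G 0) {ξ₀ ξ : V × V} (hξ₀ : ξ₀ ∈ puncturedCone p q)
    (hvan : VanishesNear Φ G ξ₀) (hξ : ξ ∈ puncturedCone p q) : VanishesNear Φ G ξ := by
  have hdiv : ∀ x : V × V,
      Tendsto (fun x => ((0 : ℂ), x)) (𝓝[puncturedCone p q] x) (𝓝 (0, x)) := fun x =>
    (Continuous.prodMk_right (0 : ℂ)).continuousAt.tendsto.mono_left nhdsWithin_le_nhds
  refine (isPathConnected_puncturedCone S.left S.right).isConnected.isPreconnected.induction₂
    (fun x x' => VanishesNear Φ G x ↔ VanishesNear Φ G x') (fun x hx => ?_)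
    (fun _ _ _ _ _ _ => Iff.trans) (fun _ _ _ _ => Iff.symm) hξ₀ hξ |>.1 hvan
  obtain ⟨W, hW, hcont⟩ := S.exists_nhds_forall_eq_zero hx hG.eventually_analyticAt
  filter_upwards [(hdiv x).eventually (eventually_mem_nhds_iff.2 hW), self_mem_nhdsWithin]
    with x' hx'W hx'
  refine ⟨fun h => ?_, fun h => ?_⟩
  · filter_upwards [hx'W] using hcont G (fun _ h => h) x (mem_of_mem_nhds hW) hx h
  · filter_upwards [hW] using hcont G (fun _ h => h) x' (mem_of_mem_nhds hx'W) hx' h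

lemma eventually_forall_eq_zero (S : IsStrictTransform k p q F Φ) {ι : Sort*}
    {G : ι → V × V → ℂ} (hG : ∀ᶠ x in 𝓝 0, ∀ i, AnalyticAt ℂ (G i) x) {ξ : V × V}
    (hξ : ξ ∈ puncturedCone p q) (hvan : ∀ i, VanishesNear Φ (G i) ξ) :
    ∀ᶠ y in 𝓝 ((0 : ℂ), ξ), Φ y = 0 → ∀ i, G i (y.1 • y.2) = 0 := by
  obtain ⟨W, hW, hcont⟩ := S.exists_nhds_forall_eq_zero hξ hG
  filter_upwards [hW] with y hy hΦy i
  exact hcont (G i) (fun _ h => h i) ξ (mem_of_mem_nhds hW) hξ (hvan i) y hy hΦy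

end Propagation

end IsStrictTransform

/-! ### The polarized Levi form of a Levi-flat hypersurface -/

lemma hasDerivAt_add_ofReal_smul {E : Type*} [NormedAddCommGroup E] [NormedSpace ℂ E] (x v : E) :
    HasDerivAt (fun t : ℝ => x + (t : ℂ) • v) v 0 := by
  simpa using ((Complex.ofRealCLM.hasDerivAt (x := (0 : ℝ))).smul_const v).const_add x

/-- Both derivatives are computed along the real line `t ↦ x + t v`. -/
lemma fderiv_conj {E E' : Type*} [NormedAddCommGroup E] [NormedSpace ℂ E] [NormedAddCommGroup E']
    [NormedSpace ℂ E'] (c : E →L⋆[ℂ] E') {f : E → ℂ} {g : E' → ℂ}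
    (hfg : ∀ y, g (c y) = star (f y)) {x : E} (hf : DifferentiableAt ℂ f x)
    (hg : DifferentiableAt ℂ g (c x)) (v : E) :
    fderiv ℂ g (c x) (c v) = star (fderiv ℂ f x v) := by
  have hf' : HasDerivAt (fun t : ℝ => f (x + (t : ℂ) • v)) (fderiv ℂ f x v) 0 :=
    (hf.hasFDerivAt.restrictScalars ℝ).comp_hasDerivAt_of_eq 0
      (hasDerivAt_add_ofReal_smul x v) (by simp)
  have hg' : HasDerivAt (fun t : ℝ => g (c x + (t : ℂ) • c v)) (fderiv ℂ g (c x) (c v)) 0 :=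
    (hg.hasFDerivAt.restrictScalars ℝ).comp_hasDerivAt_of_eq 0
      (hasDerivAt_add_ofReal_smul (c x) (c v)) (by simp)
  have hconj : (fun t : ℝ => g (c x + (t : ℂ) • c v)) = fun t : ℝ => star (f (x + (t : ℂ) • v)) :=
    funext fun t => by rw [← hfg, map_add, map_smulₛₗ, Complex.conj_ofReal]
  exact (hconj ▸ hg').unique hf'.star

/-- Polarization of the Hermitian form `v ↦ B v v̄`. -/
lemma apply_star_eq_zero_of_diag {V : Type*} [NormedAddCommGroup V] [NormedSpace ℂ V]
    [StarAddMonoid V] [StarModule ℂ V] {B : V →L[ℂ] V →L[ℂ] ℂ} {L : V →L[ℂ] ℂ}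
    (hdiag : ∀ v, L v = 0 → B v (star v) = 0) {v u : V} (hv : L v = 0) (hu : L u = 0) :
    B v (star u) = 0 := by
  have hadd := hdiag (v + u) (by simp [hv, hu])
  have hI := hdiag (v + Complex.I • u) (by simp [hv, hu])
  simp only [star_add, star_smul, map_add, map_smul, add_apply, smul_apply, smul_eq_mul,
    hdiag v hv, hdiag u hu, Complex.star_def, Complex.conj_I] at hadd hI
  have hsub : Complex.I * (B u (star v) - B v (star u)) = 0 := by linear_combination hI
  have hsymm := (mul_eq_zero.1 hsub).resolve_left Complex.I_ne_zero
  linear_combination (hadd - hsymm) / 2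

lemma tendsto_prodMk_star {V : Type*} [NormedAddCommGroup V] [StarAddMonoid V]
    [NormedStarGroup V] : Tendsto (fun z : V => (z, star z)) (𝓝 0) (𝓝 0) := by
  have hcont : Continuous fun z : V => (z, star z) := by fun_prop
  simpa [Prod.zero_eq_mk] using hcont.tendsto 0

section Conjugation

variable (V : Type*) [NormedAddCommGroup V] [NormedSpace ℂ V] [StarAddMonoid V] [StarModule ℂ V]
  [NormedStarGroup V]

/-- The conjugation `(z, w) ↦ (w̄, z̄)`, whose fixed points are the real points `(z, z̄)`. -/
def swapStar : V × V →L⋆[ℂ] V × V where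
  toFun ξ := (star ξ.2, star ξ.1)
  map_add' ξ ξ' := by simp
  map_smul' t ξ := by simp
  cont := by fun_prop

/-- The lift of `swapStar` to the blow-up of the origin. -/
def blowupSwapStar : ℂ × V × V →L⋆[ℂ] ℂ × V × V where
  toFun y := (star y.1, star y.2.2, star y.2.1)
  map_add' y y' := by simp
  map_smul' t y := by simp
  cont := by fun_prop

variable {V}

lemma swapStar_apply (ξ : V × V) : swapStar V ξ = (star ξ.2, star ξ.1) := rfl

lemma blowupSwapStar_apply (y : ℂ × V × V) :
    blowupSwapStar V y = (star y.1, swapStar V y.2) := rfl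

lemma fderivSnd_star {F : V × V → ℂ} (hherm : ∀ ξ, F (swapStar V ξ) = star (F ξ)) {z : V}
    (hF : AnalyticAt ℂ F (z, star z)) (a : V) :
    fderivSnd F (z, star z) (star a) = star (fderivFst F (z, star z) a) := by
  have hfix : swapStar V (z, star z) = (z, star z) := by simp [swapStar_apply]
  have hconj := fderiv_conj (swapStar V) hherm hF.differentiableAt
    (hfix.symm ▸ hF.differentiableAt) (a, 0)
  rw [hfix, swapStar_apply, star_zero] at hconj
  exact hconj

/-- The complexified form of Levi-flatness of `{F (z, z̄) = 0}` near the origin. -/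
def IsPolarizedLeviFlat (F : V × V → ℂ) : Prop :=
  ∀ᶠ z in 𝓝 0, F (z, star z) = 0 → fderivFst F (z, star z) ≠ 0 →
    ∀ v, fderivFst F (z, star z) v = 0 → mixedHessian F (z, star z) v (star v) = 0

lemma IsPolarizedLeviFlat.eventually_polarLevi_eq_zero {F : V × V → ℂ}
    (hlevi : IsPolarizedLeviFlat F) (hF : AnalyticAt ℂ F 0)
    (hherm : ∀ ξ, F (swapStar V ξ) = star (F ξ)) :
    ∀ᶠ z in 𝓝 0, F (z, star z) = 0 → ∀ a b a' b', polarLevi F a b a' b' (z, star z) = 0 := by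
  filter_upwards [hlevi, tendsto_prodMk_star.eventually hF.eventually_analyticAt]
    with z hz hFz hzero a b a' b'
  rcases eq_or_ne (fderivFst F (z, star z)) 0 with hd | hd
  · simp [polarLevi, hd]
  rw [polarLevi, ← star_star (fderivSnd F _ a' • b' - _)]
  refine apply_star_eq_zero_of_diag (hz hzero hd) ?_ ?_
  · simp [mul_comm]
  · rw [← star_eq_zero, ← fderivSnd_star hherm hFz]
    simp [mul_comm]

variable {k : ℕ} {p : V → ℂ} {F : V × V → ℂ} {Φ : ℂ × V × V → ℂ}

namespace IsStrictTransform

lemma eventually_apply_blowupSwapStar (S : IsStrictTransform k p (starConj p) F Φ)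
    (hherm : ∀ ξ, F (swapStar V ξ) = star (F ξ)) (ξ : V × V) :
    ∀ᶠ y in 𝓝 ((0 : ℂ), ξ), Φ (blowupSwapStar V y) = star (Φ y) := by
  have hconj : Tendsto (blowupSwapStar V) (𝓝 (0, ξ)) (𝓝 (0, swapStar V ξ)) := by
    simpa [blowupSwapStar_apply] using (blowupSwapStar V).continuous.tendsto (0, ξ)
  filter_upwards [S.eventually_eq ξ, hconj.eventually (S.eventually_eq (swapStar V ξ))]
    with ⟨r, x⟩ hrel hrel'
  rcases eq_or_ne r 0 with rfl | hr
  · simp [blowupSwapStar_apply, swapStar_apply, S.apply_zero, starConj, add_comm]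
  · rw [blowupSwapStar_apply] at hrel' ⊢
    have hsmul : star r • swapStar V x = swapStar V (r • x) := (map_smulₛₗ (swapStar V) r x).symm
    rw [hsmul, hherm, hrel, star_mul', star_pow] at hrel'
    exact (mul_left_cancel₀ (pow_ne_zero k (star_ne_zero.2 hr)) hrel').symm

lemma exists_fderiv_star_ne_zero (S : IsStrictTransform k p (starConj p) F Φ) {l : V}
    (hl : l ≠ 0) : ∃ h, fderiv ℂ Φ (0, (l, star l)) (0, (h, star h)) ≠ 0 := by
  obtain ⟨h, hh⟩ := S.left.exists_fderiv_ne_zero l hl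
  let h₁ := (fderiv ℂ p l h)⁻¹ • h
  have hleft : fderiv ℂ p l h₁ = 1 := by simp [h₁, hh]
  have hright : fderiv ℂ (starConj p) (star l) (star h₁) = 1 := by
    have hstar := fderiv_conj ((starL ℂ : V ≃L⋆[ℂ] V) : V →L⋆[ℂ] V) (f := p) (g := starConj p)
      (fun y => by simp [starConj]) (S.left.analyticAt l).differentiableAt
      (S.right.analyticAt _).differentiableAt h₁
    rw [hleft] at hstar
    simpa using hstar
  exact ⟨h₁, by simp [S.fderiv_zero, hleft, hright]⟩

/-- At the real points of the strict transform this is Levi-flatness, and the real points of a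
regular hypersurface are a uniqueness set. -/
lemma exists_vanishesNear_polarLevi [CompleteSpace V]
    (S : IsStrictTransform k p (starConj p) F Φ) (hherm : ∀ ξ, F (swapStar V ξ) = star (F ξ))
    (hlevi : IsPolarizedLeviFlat F) :
    ∃ ξ ∈ puncturedCone p (starConj p), ∀ a b a' b', VanishesNear Φ (polarLevi F a b a' b') ξ := by
  obtain ⟨l, hl0, hl⟩ := S.left.exists_zero
  have hcone : (l, star l) ∈ puncturedCone p (starConj p) :=
    ⟨fun h => hl0 (congrArg Prod.fst h), by simp [starConj, hl]⟩
  obtain ⟨h, hh⟩ := S.exists_fderiv_star_ne_zero hl0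
  refine ⟨(l, star l), hcone, fun a b a' b' => eventually_eq_zero_on_of_real
    (S.analyticAt_transform (l, star l)) (S.eq_zero_of_mem_puncturedCone hcone) hh
    (c := blowupSwapStar V) (fun y => by simp [blowupSwapStar_apply, swapStar_apply])
    (by simp [blowupSwapStar_apply, swapStar_apply])
    (by simp [blowupSwapStar_apply, swapStar_apply])
    (S.eventually_apply_blowupSwapStar hherm (l, star l))
    (analyticAt_comp_smul (by simpa using analyticAt_polarLevi S.analyticAt a b a' b')) ?_⟩
  have hfst : Tendsto (fun y : ℂ × V × V => y.1 • y.2.1) (𝓝 (0, (l, star l))) (𝓝 0) := by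
    simpa [Function.comp_def] using
      (continuous_fst.tendsto _).comp (tendsto_smul_zero_nhds (𝕜 := ℂ) (l, star l))
  filter_upwards [S.eventually_eq_zero (l, star l),
    hfst.eventually (hlevi.eventually_polarLevi_eq_zero S.analyticAt hherm)]
    with ⟨r, z, w⟩ hF hlev hfix hΦ
  have hr : star r = r := congrArg Prod.fst hfix
  have hw : star z = w := congrArg (fun y => y.2.2) hfix
  have hreal : r • (z, w) = (r • z, star (r • z)) := by rw [star_smul, hr, hw]; rfl
  rw [hreal] at hF ⊢
  exact hlev (hF hΦ) a b a' b'

lemma vanishesNear_polarLevi [CompleteSpace V] (S : IsStrictTransform k p (starConj p) F Φ)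
    (hherm : ∀ ξ, F (swapStar V ξ) = star (F ξ)) (hlevi : IsPolarizedLeviFlat F) {ξ : V × V}
    (hξ : ξ ∈ puncturedCone p (starConj p)) (a b a' b' : V) :
    VanishesNear Φ (polarLevi F a b a' b') ξ := by
  obtain ⟨ξ₀, hξ₀, hvan⟩ := S.exists_vanishesNear_polarLevi hherm hlevi
  exact S.vanishesNear_of_mem_puncturedCone (analyticAt_polarLevi S.analyticAt a b a' b') hξ₀
    (hvan a b a' b') hξ

end IsStrictTransform

end Conjugation

/-! ### Integrability along the fibres -/

section LocalIntegrability

variable {V : Type*} [NormedAddCommGroup V] [NormedSpace ℂ V] {f : V → ℂ} {F : V × V → ℂ}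
  {ξ : V × V}

/-- The `2`-form `df ∧ ∂_z F`, evaluated at `(a, b)`. -/
noncomputable def wedgeFst (f : V → ℂ) (F : V × V → ℂ) (a b : V) (ξ : V × V) : ℂ :=
  fderiv ℂ f ξ.1 a * fderivFst F ξ b - fderiv ℂ f ξ.1 b * fderivFst F ξ a

lemma analyticAt_fderiv_fst (hf : AnalyticAt ℂ f ξ.1) (a : V) :
    AnalyticAt ℂ (fun x : V × V => fderiv ℂ f x.1 a) ξ :=
  ((ContinuousLinearMap.apply ℂ ℂ a).analyticAt _).fun_comp (hf.fderiv.fun_comp analyticAt_fst)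

lemma analyticAt_wedgeFst (hF : AnalyticAt ℂ F ξ) (hf : AnalyticAt ℂ f ξ.1) (a b : V) :
    AnalyticAt ℂ (wedgeFst f F a b) ξ :=
  ((analyticAt_fderiv_fst hf a).mul (analyticAt_fderivFst hF b)).sub
    ((analyticAt_fderiv_fst hf b).mul (analyticAt_fderivFst hF a))

lemma fderivFst_graph {b u z : V} (hF : AnalyticAt ℂ F (z, b + f z • u)) (hf : AnalyticAt ℂ f z)
    (hgraph : ∀ᶠ z in 𝓝 z, F (z, b + f z • u) = 0) (a : V) :
    fderivFst F (z, b + f z • u) a = -(fderiv ℂ f z a * fderivSnd F (z, b + f z • u) u) := by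
  have hW : HasFDerivAt (fun z => (z, b + f z • u))
      ((ContinuousLinearMap.id ℂ V).prod ((fderiv ℂ f z).smulRight u)) z :=
    (hasFDerivAt_id z).prodMk ((hf.differentiableAt.hasFDerivAt.smul_const u).const_add b)
  have hzero : HasFDerivAt (fun z => F (z, b + f z • u)) (0 : V →L[ℂ] ℂ) z :=
    (hasFDerivAt_const (0 : ℂ) z).congr_of_eventuallyEq hgraph
  have hchain := DFunLike.congr_fun
    ((hF.differentiableAt.hasFDerivAt.comp z hW).unique hzero) a
  have hsplit : (a, fderiv ℂ f z a • u) = (a, (0 : V)) + fderiv ℂ f z a • ((0 : V), u) := by simp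
  simp only [ContinuousLinearMap.comp_apply, ContinuousLinearMap.prod_apply,
    ContinuousLinearMap.id_apply, ContinuousLinearMap.smulRight_apply, hsplit, map_add, map_smul,
    zero_apply, smul_eq_mul] at hchain
  exact eq_neg_of_add_eq_zero_left hchain

/-- Vanishing of the Levi form says that the direction of `∂_z F` is constant along the fibres of
the first projection. -/
lemma fderiv_div_fderivFst_eq_zero (hF : AnalyticAt ℂ F ξ) {a c u v : V}
    (hlevi : polarLevi F c a u v ξ = 0) (hc : fderivFst F ξ c ≠ 0) (hu : fderivSnd F ξ u ≠ 0)
    (hv : fderivSnd F ξ v = 0) :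
    fderiv ℂ (fun x => fderivFst F x a / fderivFst F x c) ξ (0, v) = 0 := by
  have hinv := (hasDerivAt_inv hc).comp_hasFDerivAt ξ
    (analyticAt_fderivFst hF c).differentiableAt.hasFDerivAt
  have hquot := (analyticAt_fderivFst hF a).differentiableAt.hasFDerivAt.mul hinv
  simp only [polarLevi, hv, zero_smul, sub_zero, map_sub, map_smul, sub_apply, smul_apply,
    smul_eq_mul] at hlevi
  have hnum := (mul_eq_zero.1 hlevi).resolve_left hu
  have hfderiv : fderiv ℂ (fun x => fderivFst F x a / fderivFst F x c) ξ (0, v) =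
      fderivFst F ξ a * (-(fderivFst F ξ c ^ 2)⁻¹ * mixedHessian F ξ c v) +
        (fderivFst F ξ c)⁻¹ * mixedHessian F ξ a v := by
    rw [← fderiv_fderivFst hF, ← fderiv_fderivFst hF]
    exact DFunLike.congr_fun (HasFDerivAt.fderiv hquot) (0, v)
  rw [hfderiv]
  field_simp
  linear_combination hnum

variable [CompleteSpace V]

lemma eventually_eq_comp_section {E : Type*} [NormedAddCommGroup E] [NormedSpace ℂ E]
    {q : V → ℂ} {Φ : V → ℂ} {y₀ v : V} (hΦ : AnalyticAt ℂ Φ y₀) (hv : fderiv ℂ Φ y₀ v ≠ 0)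
    (hq : AnalyticAt ℂ q y₀) (π : V →L[ℂ] E) (hπ : π v = 0)
    (hd : ∀ᶠ y in 𝓝 y₀, Φ y = 0 → ∀ u, π u = 0 → fderiv ℂ Φ y u = 0 → fderiv ℂ q y u = 0)
    {s : E → V} (hs : ContinuousAt s (π y₀)) (hsy : s (π y₀) = y₀)
    (hsec : ∀ᶠ e in 𝓝 (π y₀), Φ (s e) = 0 ∧ π (s e) = e) :
    ∀ᶠ y in 𝓝 y₀, Φ y = 0 → q y = q (s (π y)) := by
  have h0 : Φ y₀ = 0 := hsy ▸ hsec.self_of_nhds.1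
  obtain ⟨U, hU, hconst⟩ := exists_nhds_eq_of_map_eq hΦ h0 hv hq π hπ hd
  have hsU : ∀ᶠ e in 𝓝 (π y₀), s e ∈ U := hs.eventually (hsy.symm ▸ hU)
  filter_upwards [hU, π.continuous.continuousAt.eventually hsU,
    π.continuous.continuousAt.eventually hsec] with y hy hsy hsec hΦy
  exact hconst y hy _ hsy hΦy hsec.1 hsec.2.symm

/-- The quotient `∂_z F(a) / ∂_z F(c)` depends on `z` only, so its value can be computed on the
graph. -/
lemma eventually_wedgeFst_eq_zero_of_ne_zero {b u z c : V} (hF : AnalyticAt ℂ F (z, b + f z • u))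
    (hf : AnalyticAt ℂ f z) (hgraph : ∀ᶠ z in 𝓝 z, F (z, b + f z • u) = 0)
    (hu : fderivSnd F (z, b + f z • u) u ≠ 0)
    (hlevi : ∀ᶠ ξ in 𝓝 (z, b + f z • u), F ξ = 0 → ∀ a b a' b', polarLevi F a b a' b' ξ = 0)
    (hc : fderiv ℂ f z c ≠ 0) (a : V) :
    ∀ᶠ ξ in 𝓝 (z, b + f z • u), F ξ = 0 → wedgeFst f F a c ξ = 0 := by
  set s : V → V × V := fun z => (z, b + f z • u)
  have hs : ContinuousAt s z := by
    have := hf.continuousAt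
    fun_prop
  have hchain : ∀ᶠ z in 𝓝 z, ∀ a, fderivFst F (s z) a = -(fderiv ℂ f z a * fderivSnd F (s z) u) :=
    by filter_upwards [hgraph.eventually_nhds, hf.eventually_analyticAt,
        hs.eventually hF.eventually_analyticAt] with z hz hfz hFz using fderivFst_graph hFz hfz hz
  have hdc : fderivFst F (s z) c ≠ 0 := by
    rw [hchain.self_of_nhds]
    exact neg_ne_zero.2 (mul_ne_zero hc hu)
  have hdc' : ∀ᶠ ξ in 𝓝 (s z), fderivFst F ξ c ≠ 0 :=
    (analyticAt_fderivFst hF c).continuousAt.eventually_ne hdc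
  have hu' : ∀ᶠ ξ in 𝓝 (s z), fderivSnd F ξ u ≠ 0 :=
    (analyticAt_fderivSnd hF u).continuousAt.eventually_ne hu
  have hquot := eventually_eq_comp_section hF (v := (0, u)) hu
    ((analyticAt_fderivFst hF a).fun_div (analyticAt_fderivFst hF c) hdc) (.fst ℂ V V) (by simp)
    (by
      filter_upwards [hF.eventually_analyticAt, hdc', hu', hlevi] with ξ hFξ hcξ huξ hlevξ hξ
      rintro ⟨v₁, v⟩ rfl hv
      exact fderiv_div_fderivFst_eq_zero hFξ (hlevξ hξ c a u v) hcξ huξ hv)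
    (s := s) hs rfl (hgraph.mono fun _ h => ⟨h, rfl⟩)
  have hfst : Tendsto Prod.fst (𝓝 (s z)) (𝓝 z) := continuousAt_fst
  filter_upwards [hquot, hdc', hfst.eventually hchain, hfst.eventually (hs.eventually hdc')]
    with ξ hq hcξ hch hcs hξ
  replace hq := hq hξ
  rw [ContinuousLinearMap.coe_fst', div_eq_div_iff hcξ hcs, hch, hch] at hq
  rw [hch] at hcs
  have hne := right_ne_zero_of_mul (neg_ne_zero.1 hcs)
  exact (mul_eq_zero.1 (by rw [wedgeFst]; linear_combination hq :
    fderivSnd F (s ξ.1) u * wedgeFst f F a c ξ = 0)).resolve_left hne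

lemma eventually_wedgeFst_eq_zero {b u z : V} (hF : AnalyticAt ℂ F (z, b + f z • u))
    (hf : AnalyticAt ℂ f z) (hgraph : ∀ᶠ z in 𝓝 z, F (z, b + f z • u) = 0)
    (hu : fderivSnd F (z, b + f z • u) u ≠ 0)
    (hlevi : ∀ᶠ ξ in 𝓝 (z, b + f z • u), F ξ = 0 → ∀ a b a' b', polarLevi F a b a' b' ξ = 0)
    (hdf : fderiv ℂ f z ≠ 0) (a₁ a₂ : V) :
    ∀ᶠ ξ in 𝓝 (z, b + f z • u), F ξ = 0 → wedgeFst f F a₁ a₂ ξ = 0 := by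
  obtain ⟨c, hc⟩ := DFunLike.ne_iff.1 hdf
  have hwedge := eventually_wedgeFst_eq_zero_of_ne_zero hF hf hgraph hu hlevi hc
  filter_upwards [hwedge a₁, hwedge a₂,
    (analyticAt_fderiv_fst (ξ := (z, b + f z • u)) hf c).continuousAt.eventually_ne hc]
    with ξ h₁ h₂ hcξ hξ
  have hmul : fderiv ℂ f ξ.1 c * wedgeFst f F a₁ a₂ ξ = 0 := by
    have e₁ := h₁ hξ
    have e₂ := h₂ hξ
    unfold wedgeFst at *
    linear_combination fderiv ℂ f ξ.1 a₂ * e₁ - fderiv ℂ f ξ.1 a₁ * e₂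
  exact (mul_eq_zero.1 hmul).resolve_left hcξ

end LocalIntegrability

/-! ### The two first integrals -/

section Graph

variable {V : Type*} [NormedAddCommGroup V] [NormedSpace ℂ V]

/-- The graph of `τ` over the exceptional divisor's coordinates `(r, x)`, through the point `(0, ξ)`
of the blow-up, in the affine subspace spanned by the range of `ι` and the direction `η`. -/
def blowupGraph (ξ η : V × V) (ι : V →L[ℂ] V × V) (τ : ℂ × V → ℂ) (p : ℂ × V) : ℂ × V × V :=
  (p.1, ξ + ι p.2 + τ p • η)

/-- The restriction of `τ` to the slice `r = const` of the blow-up, as a function of `z = r x`. -/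
noncomputable def slice (τ : ℂ × V → ℂ) (r : ℂ) (z : V) : ℂ :=
  τ (r, r⁻¹ • z)

variable {ξ η : V × V} {ι : V →L[ℂ] V × V} {τ : ℂ × V → ℂ}

lemma tendsto_blowupGraph (hτ : ContinuousAt τ 0) (hτ0 : τ 0 = 0) :
    Tendsto (blowupGraph ξ η ι τ) (𝓝 0) (𝓝 (0, ξ)) := by
  have hcont : ContinuousAt (blowupGraph ξ η ι τ) 0 := by
    unfold blowupGraph
    fun_prop
  simpa [blowupGraph, hτ0] using hcont.tendsto

lemma smul_blowupGraph {r : ℂ} (hr : r ≠ 0) (z : V) :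
    r • (blowupGraph ξ η ι τ (r, r⁻¹ • z)).2 = r • ξ + ι z + slice τ r z • r • η := by
  simp only [blowupGraph, slice, smul_add, map_smul, smul_inv_smul₀ hr, smul_comm r]

lemma exists_pos_forall_rescale {R : ℂ × V → Prop} (hR : ∀ᶠ p in 𝓝 0, R p) :
    ∃ δ > 0, ∀ r : ℂ, r ≠ 0 → ‖r‖ < δ → ∀ z : V, ‖z‖ < ‖r‖ * δ → R (r, r⁻¹ • z) := by
  obtain ⟨δ, hδ, hball⟩ := Metric.eventually_nhds_iff_ball.1 hR
  refine ⟨δ, hδ, fun r hr hrδ z hz => hball _ ?_⟩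
  rw [mem_ball_zero_iff, Prod.norm_def, max_lt_iff, norm_smul, norm_inv,
    inv_mul_lt_iff₀ (norm_pos_iff.2 hr)]
  exact ⟨hrδ, hz⟩

lemma analyticAt_slice {r : ℂ} {z : V} (hτ : AnalyticAt ℂ τ (r, r⁻¹ • z)) :
    AnalyticAt ℂ (slice τ r) z :=
  AnalyticAt.fun_comp (f := fun z => (r, r⁻¹ • z)) hτ
    (analyticAt_const.prod (analyticAt_const.fun_smul analyticAt_id))

end Graph

namespace IsStrictTransform

variable {V : Type*} [NormedAddCommGroup V] [NormedSpace ℂ V] [CompleteSpace V] {k : ℕ}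
  {p q : V → ℂ} {F : V × V → ℂ} {Φ : ℂ × V × V → ℂ}

/-- Vanishing near a point off the exceptional divisor is continued through the part of the strict
transform that lies in a thin cylinder around the fibre of `π`. -/
lemma exists_nhds_vanishesNear (S : IsStrictTransform k p q F Φ) {ξ η : V × V}
    (hξ : ξ ∈ puncturedCone p q) (hη : fderiv ℂ Φ (0, ξ) (0, η) ≠ 0) (π : V × V →L[ℂ] V)
    (hπξ : π ξ = 0) (hπη : π η = 0) {A : Set (V × V)} (hA : A ∈ 𝓝 0) :
    ∃ W ∈ 𝓝 ((0 : ℂ), ξ), ∀ r : ℂ, r ≠ 0 → ∀ δ > 0, ∀ G : V × V → ℂ,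
      (∀ x ∈ A, ‖π x‖ < ‖r‖ * δ → AnalyticAt ℂ G x) → ∀ ξ', (r, ξ') ∈ W → ‖π ξ'‖ < δ / 2 →
      Φ (r, ξ') = 0 → (∀ᶠ x in 𝓝 (r • ξ'), F x = 0 → G x = 0) → VanishesNear Φ G ξ := by
  obtain ⟨W, hW, hcont⟩ := exists_nhds_continuation (S.analyticAt_transform ξ)
    (S.eq_zero_of_mem_puncturedCone hξ) hη ((tendsto_smul_zero_nhds ξ).eventually hA)
  refine ⟨W ∩ {y | ∀ᶠ y' in 𝓝 y, Φ y' = 0 → F (y'.1 • y'.2) = 0},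
    inter_mem hW (S.eventually_eq_zero ξ).eventually_nhds,
    fun r hr δ hδ G hG ξ' hmem hξ' hΦ hvan => ?_⟩
  have hr' : 0 < ‖r‖ := norm_pos_iff.2 hr
  let C : Set (ℂ × V × V) := Metric.ball 0 (2 * ‖r‖) ×ˢ (π ⁻¹' Metric.ball 0 (δ / 2))
  have hC : C ∈ 𝓝 ((0 : ℂ), ξ) := prod_mem_nhds (Metric.ball_mem_nhds _ (by positivity))
    (π.continuous.continuousAt.preimage_mem_nhds
      (hπξ.symm ▸ Metric.ball_mem_nhds _ (half_pos hδ)))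
  have hC_convex : Convex ℝ C :=
    (convex_ball _ _).prod ((convex_ball _ _).is_linear_preimage
      ((π.restrictScalars ℝ).toLinearMap.isLinear))
  have hvan' : ∀ᶠ y in 𝓝 (r, ξ'), Φ y = 0 → G (y.1 • y.2) = 0 := by
    have hsmul : ContinuousAt (fun y : ℂ × V × V => y.1 • y.2) (r, ξ') := by fun_prop
    filter_upwards [hmem.2, hsmul.eventually hvan] with y hy hGy hΦy using hGy (hy hΦy)
  filter_upwards [inter_mem hW hC]
  refine hcont C hC_convex (fun y hy t => ⟨by simpa using hy.1, by simpa [hπη] using hy.2⟩) _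
    (fun y hy => analyticAt_comp_smul (hG _ hy.1 ?_)) (r, ξ')
    ⟨hmem.1, by simp [hr'], by simpa using hξ'⟩ hΦ hvan'
  have hy₁ : ‖y.1‖ < 2 * ‖r‖ := mem_ball_zero_iff.1 hy.2.1
  have hy₂ : ‖π y.2‖ < δ / 2 := mem_ball_zero_iff.1 hy.2.2
  calc ‖π (y.1 • y.2)‖ = ‖y.1‖ * ‖π y.2‖ := by rw [map_smul, norm_smul]
    _ < 2 * ‖r‖ * (δ / 2) := by gcongr
    _ = ‖r‖ * δ := by ring

lemma eventually_polarLevi_eq_zero (S : IsStrictTransform k p q F Φ) {ξ : V × V}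
    (hξ : ξ ∈ puncturedCone p q)
    (hlevi : ∀ a b a' b', VanishesNear Φ (polarLevi F a b a' b') ξ) :
    ∀ᶠ y in 𝓝 ((0 : ℂ), ξ), y.1 ≠ 0 → ∀ᶠ x in 𝓝 (y.1 • y.2), F x = 0 →
      ∀ a b a' b', polarLevi F a b a' b' x = 0 := by
  refine S.eventually_descend (Q := fun x => ∀ a b a' b', polarLevi F a b a' b' x = 0) ?_
  have huniform := S.eventually_forall_eq_zero
    (G := fun i : V × V × V × V => polarLevi F i.1 i.2.1 i.2.2.1 i.2.2.2)
    (S.analyticAt.eventually_analyticAt.mono fun _ hx i => analyticAt_polarLevi hx _ _ _ _) hξ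
    fun i => hlevi _ _ _ _
  exact huniform.mono fun y hy hΦ a b a' b' => hy hΦ (a, b, a', b')

lemma exists_pos_forall_slice (S : IsStrictTransform k p q F Φ) {m u : V}
    (hm : (0, m) ∈ puncturedCone p q) (hu : fderiv ℂ Φ (0, (0, m)) (0, (0, u)) ≠ 0)
    (hlevi : ∀ a b a' b', VanishesNear Φ (polarLevi F a b a' b') (0, m)) {τ : ℂ × V → ℂ}
    (hτ : AnalyticAt ℂ τ 0) (hτ0 : τ 0 = 0)
    (hsec : ∀ᶠ x in 𝓝 0, Φ (blowupGraph (0, m) (0, u) (.inl ℂ V V) τ x) = 0)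
    {W : Set (ℂ × V × V)} (hW : W ∈ 𝓝 (0, (0, m))) :
    ∃ δ > 0, ∀ r : ℂ, r ≠ 0 → ‖r‖ < δ → ∀ z : V, ‖z‖ < ‖r‖ * δ → AnalyticAt ℂ (slice τ r) z ∧
      blowupGraph (0, m) (0, u) (.inl ℂ V V) τ (r, r⁻¹ • z) ∈ W ∩ {y | Φ y = 0} ∧
      (fderiv ℂ (slice τ r) z ≠ 0 → ∀ a b,
        ∀ᶠ x in 𝓝 (r • (blowupGraph (0, m) (0, u) (.inl ℂ V V) τ (r, r⁻¹ • z)).2),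
          F x = 0 → wedgeFst (slice τ r) F a b x = 0) := by
  have hgraph := tendsto_blowupGraph (ξ := (0, m)) (η := (0, u)) (ι := .inl ℂ V V)
    hτ.continuousAt hτ0
  obtain ⟨δ, hδ, hslice⟩ := exists_pos_forall_rescale <| hτ.eventually_analyticAt.and <|
    (hgraph.eventually hW).and <| hsec.and <|
    (hgraph.eventually (S.eventually_eq_zero (0, m))).and <|
    (hgraph.eventually (S.eventually_analyticAt (0, m))).and <|
    (hgraph.eventually (S.eventually_fderiv_ne_zero hu)).and
    (hgraph.eventually (S.eventually_polarLevi_eq_zero hm hlevi))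
  refine ⟨δ, hδ, fun r hr hrδ z hz => ?_⟩
  have hpoint : ∀ z, r • (blowupGraph (0, m) (0, u) (.inl ℂ V V) τ (r, r⁻¹ • z)).2 =
      (z, r • m + slice τ r z • r • u) := fun z => by simp [smul_blowupGraph hr]
  have hzero : ∀ᶠ z' in 𝓝 z, F (z', r • m + slice τ r z' • r • u) = 0 := by
    filter_upwards [continuous_norm.continuousAt.eventually_lt_const hz] with z' hz'
    obtain ⟨-, -, hΦz', hFz', -⟩ := hslice r hr hrδ z' hz'
    exact hpoint z' ▸ hFz' hΦz'
  obtain ⟨hτz, hWz, hΦz, -, hFz, huz, hlevz⟩ := hslice r hr hrδ z hz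
  have huz' : fderivSnd F (z, r • m + slice τ r z • r • u) (r • u) ≠ 0 := by
    rw [map_smul]
    exact smul_ne_zero hr (hpoint z ▸ huz hr)
  refine ⟨analyticAt_slice hτz, ⟨hWz, hΦz⟩, fun hdf => ?_⟩
  rw [hpoint]
  exact eventually_wedgeFst_eq_zero (hpoint z ▸ hFz) (analyticAt_slice hτz) hzero huz'
    (hpoint z ▸ hlevz hr) hdf

/-- If `df` vanishes near `0` there is nothing to prove; otherwise the relation holds near a point
of the slice where `df ≠ 0` and is continued to the exceptional divisor. -/
lemma eventually_vanishesNear_wedgeFst (S : IsStrictTransform k p q F Φ) {m u : V}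
    (hm : (0, m) ∈ puncturedCone p q) (hu : fderiv ℂ Φ (0, (0, m)) (0, (0, u)) ≠ 0)
    (hlevi : ∀ a b a' b', VanishesNear Φ (polarLevi F a b a' b') (0, m)) {τ : ℂ × V → ℂ}
    (hτ : AnalyticAt ℂ τ 0) (hτ0 : τ 0 = 0)
    (hsec : ∀ᶠ x in 𝓝 0, Φ (blowupGraph (0, m) (0, u) (.inl ℂ V V) τ x) = 0) :
    ∀ᶠ r in 𝓝[≠] (0 : ℂ), AnalyticAt ℂ (slice τ r) 0 ∧
      ∀ a b, ∀ ξ ∈ puncturedCone p q, VanishesNear Φ (wedgeFst (slice τ r) F a b) ξ := by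
  obtain ⟨W, hW, hcont⟩ := S.exists_nhds_vanishesNear hm hu (.fst ℂ V V) rfl rfl
    S.analyticAt.eventually_analyticAt
  obtain ⟨δ, hδ, hslice⟩ := S.exists_pos_forall_slice hm hu hlevi hτ hτ0 hsec hW
  filter_upwards [nhdsWithin_le_nhds (Metric.ball_mem_nhds (0 : ℂ) hδ), self_mem_nhdsWithin]
    with r hrδ hr
  replace hslice := hslice r hr (mem_ball_zero_iff.1 hrδ)
  have hr' : 0 < ‖r‖ := norm_pos_iff.2 hr
  have hf : AnalyticAt ℂ (slice τ r) 0 := (hslice 0 (by simpa using mul_pos hr' hδ)).1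
  refine ⟨hf, fun a b ξ hξ => S.vanishesNear_of_mem_puncturedCone
    (analyticAt_wedgeFst S.analyticAt hf a b) hm ?_ hξ⟩
  by_cases hconst : ∀ᶠ z in 𝓝 0, fderiv ℂ (slice τ r) z = 0
  · filter_upwards [(tendsto_smul_zero_nhds (𝕜 := ℂ) ((0 : V), m)).eventually
      ((continuousAt_fst (p := (0 : V × V))).eventually hconst)] with y hy _
    rw [wedgeFst, hy]
    simp
  · obtain ⟨z, hdf, hz⟩ := ((not_eventually.1 hconst).and_eventually
      (Metric.ball_mem_nhds (0 : V) (mul_pos hr' (half_pos hδ)))).exists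
    replace hz : ‖z‖ < ‖r‖ * (δ / 2) := mem_ball_zero_iff.1 hz
    obtain ⟨-, ⟨hWz, hΦz⟩, hwedge⟩ := hslice z (hz.trans (by gcongr; linarith))
    refine hcont r hr δ hδ _ (fun x hx hxr => analyticAt_wedgeFst hx (hslice x.1 hxr).1 a b) _
      hWz ?_ hΦz (hwedge hdf a b)
    simpa [blowupGraph, norm_smul, inv_mul_lt_iff₀ hr'] using hz

end IsStrictTransform

section SecondIntegral

variable {V : Type*} [NormedAddCommGroup V] [NormedSpace ℂ V] [CompleteSpace V]

lemma eventually_sub_comp_graph_eq_zero {f : V → ℂ} {F : V × V → ℂ} {σ : V → ℂ} {b u w : V}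
    (hF : AnalyticAt ℂ F (b + σ w • u, w)) (hf : AnalyticAt ℂ f (b + σ w • u))
    (hσ : ContinuousAt σ w) (hgraph : ∀ᶠ w in 𝓝 w, F (b + σ w • u, w) = 0)
    (hu : fderivFst F (b + σ w • u, w) u ≠ 0)
    (hwedge : ∀ᶠ ξ in 𝓝 (b + σ w • u, w), F ξ = 0 → ∀ a, wedgeFst f F a u ξ = 0) :
    ∀ᶠ ξ in 𝓝 (b + σ w • u, w), F ξ = 0 → f ξ.1 - f (b + σ ξ.2 • u) = 0 := by
  have hf' : AnalyticAt ℂ (fun ξ : V × V => f ξ.1) (b + σ w • u, w) :=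
    AnalyticAt.fun_comp (g := f) hf analyticAt_fst
  have hker : ∀ᶠ ξ in 𝓝 (b + σ w • u, w), F ξ = 0 → ∀ v, ContinuousLinearMap.snd ℂ V V v = 0 →
      fderiv ℂ F ξ v = 0 → fderiv ℂ (fun ξ : V × V => f ξ.1) ξ v = 0 := by
    filter_upwards [hwedge, (analyticAt_fderivFst hF u).continuousAt.eventually_ne hu,
      (continuousAt_fst (p := (b + σ w • u, w))).eventually hf.eventually_analyticAt]
    rintro ξ hξ huξ hfξ hFξ ⟨a, a'⟩ rfl ha
    have hprod : fderiv ℂ f ξ.1 a * fderivFst F ξ u = 0 := by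
      have hza : fderivFst F ξ a = 0 := ha
      simpa [wedgeFst, hza] using hξ hFξ a
    have hchain : HasFDerivAt (fun ξ : V × V => f ξ.1) ((fderiv ℂ f ξ.1).comp (.fst ℂ V V)) ξ :=
      hfξ.differentiableAt.hasFDerivAt.comp ξ hasFDerivAt_fst
    rw [hchain.fderiv]
    exact (mul_eq_zero.1 hprod).resolve_right huξ
  have hconst := eventually_eq_comp_section hF (v := (u, 0)) hu hf' (.snd ℂ V V) rfl hker
    (s := fun w => (b + σ w • u, w)) (by simp only [ContinuousLinearMap.coe_snd']; fun_prop) rfl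
    (hgraph.mono fun w hw => ⟨hw, rfl⟩)
  exact hconst.mono fun ξ hξ hFξ => sub_eq_zero.2 (hξ hFξ)

namespace IsStrictTransform

variable {k : ℕ} {p q : V → ℂ} {F : V × V → ℂ} {Φ : ℂ × V × V → ℂ}

lemma exists_blowupGraph (S : IsStrictTransform k p q F Φ) {ξ η : V × V}
    (hξ : ξ ∈ puncturedCone p q) (hη : fderiv ℂ Φ (0, ξ) (0, η) ≠ 0) (ι : V →L[ℂ] V × V) :
    ∃ τ : ℂ × V → ℂ, AnalyticAt ℂ τ 0 ∧ τ 0 = 0 ∧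
      ∀ᶠ x in 𝓝 0, Φ (blowupGraph ξ η ι τ x) = 0 := by
  obtain ⟨τ, hτ, hτ0, hsec⟩ := exists_implicit (S.analyticAt_transform ξ)
    (S.eq_zero_of_mem_puncturedCone hξ) hη
    ((ContinuousLinearMap.fst ℂ ℂ V).prod (ι.comp (.snd ℂ ℂ V)))
  exact ⟨τ, hτ, hτ0, by simpa [blowupGraph] using hsec⟩

lemma eventually_wedgeFst_eq_zero (S : IsStrictTransform k p q F Φ) {ξ : V × V}
    (hξ : ξ ∈ puncturedCone p q) {f : V → ℂ} (hf : AnalyticAt ℂ f 0) {u : V}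
    (hwedge : ∀ a, VanishesNear Φ (wedgeFst f F a u) ξ) :
    ∀ᶠ y in 𝓝 ((0 : ℂ), ξ), y.1 ≠ 0 → ∀ᶠ x in 𝓝 (y.1 • y.2), F x = 0 →
      ∀ a, wedgeFst f F a u x = 0 := by
  refine S.eventually_descend (Q := fun x => ∀ a, wedgeFst f F a u x = 0)
    (S.eventually_forall_eq_zero ?_ hξ hwedge)
  filter_upwards [S.analyticAt.eventually_analyticAt,
    (continuousAt_fst (p := (0 : V × V))).eventually hf.eventually_analyticAt] with x hF hf a
  exact analyticAt_wedgeFst hF hf a u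

lemma exists_pos_forall_slice_snd (S : IsStrictTransform k p q F Φ) {l u : V}
    (hl : (l, 0) ∈ puncturedCone p q) (hu : fderiv ℂ Φ (0, (l, 0)) (0, (u, 0)) ≠ 0)
    {f : V → ℂ} (hf : AnalyticAt ℂ f 0) (hwedge : ∀ a, VanishesNear Φ (wedgeFst f F a u) (l, 0))
    {σ : ℂ × V → ℂ} (hσ : AnalyticAt ℂ σ 0) (hσ0 : σ 0 = 0)
    (hsec : ∀ᶠ x in 𝓝 0, Φ (blowupGraph (l, 0) (u, 0) (.inr ℂ V V) σ x) = 0)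
    {W : Set (ℂ × V × V)} (hW : W ∈ 𝓝 (0, (l, 0))) :
    ∃ δ > 0, ∀ r : ℂ, r ≠ 0 → ‖r‖ < δ → ∀ w : V, ‖w‖ < ‖r‖ * δ →
      AnalyticAt ℂ (fun w => f (r • l + slice σ r w • r • u)) w ∧
      blowupGraph (l, 0) (u, 0) (.inr ℂ V V) σ (r, r⁻¹ • w) ∈ W ∩ {y | Φ y = 0} ∧
      ∀ᶠ x in 𝓝 (r • (blowupGraph (l, 0) (u, 0) (.inr ℂ V V) σ (r, r⁻¹ • w)).2),
        F x = 0 → f x.1 - f (r • l + slice σ r x.2 • r • u) = 0 := by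
  have hgraph := tendsto_blowupGraph (ξ := (l, 0)) (η := (u, 0)) (ι := .inr ℂ V V)
    hσ.continuousAt hσ0
  have hfst : ∀ᶠ x in 𝓝 (0 : V × V), AnalyticAt ℂ f x.1 :=
    continuousAt_fst.eventually hf.eventually_analyticAt
  obtain ⟨δ, hδ, hslice⟩ := exists_pos_forall_rescale <| hσ.eventually_analyticAt.and <|
    (hgraph.eventually hW).and <| hsec.and <|
    (hgraph.eventually (S.eventually_eq_zero (l, 0))).and <|
    (hgraph.eventually (S.eventually_analyticAt (l, 0))).and <|
    (hgraph.eventually (S.eventually_fderiv_ne_zero hu)).and <|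
    (hgraph.eventually (S.eventually_wedgeFst_eq_zero hl hf hwedge)).and
    (hgraph.eventually ((tendsto_smul_zero_nhds (l, (0 : V))).eventually hfst))
  refine ⟨δ, hδ, fun r hr hrδ w hw => ?_⟩
  have hpoint : ∀ w, r • (blowupGraph (l, 0) (u, 0) (.inr ℂ V V) σ (r, r⁻¹ • w)).2 =
      (r • l + slice σ r w • r • u, w) := fun w => by simp [smul_blowupGraph hr]
  have hzero : ∀ᶠ w' in 𝓝 w, F (r • l + slice σ r w' • r • u, w') = 0 := by
    filter_upwards [continuous_norm.continuousAt.eventually_lt_const hw] with w' hw'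
    obtain ⟨-, -, hΦw', hFw', -⟩ := hslice r hr hrδ w' hw'
    exact hpoint w' ▸ hFw' hΦw'
  obtain ⟨hσw, hWw, hΦw, -, hFw, huw, hwedgew, hfw⟩ := hslice r hr hrδ w hw
  replace hfw : AnalyticAt ℂ f (r • l + slice σ r w • r • u, w).1 := hpoint w ▸ hfw
  have huw' : fderivFst F (r • l + slice σ r w • r • u, w) (r • u) ≠ 0 := by
    rw [map_smul]
    exact smul_ne_zero hr (hpoint w ▸ huw hr)
  refine ⟨?_, ⟨hWw, hΦw⟩, ?_⟩
  · exact hfw.fun_comp (f := fun w => r • l + slice σ r w • r • u)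
      (analyticAt_const.add ((analyticAt_slice hσw).smul analyticAt_const))
  · rw [hpoint]
    refine eventually_sub_comp_graph_eq_zero (hpoint w ▸ hFw) hfw
      (analyticAt_slice hσw).continuousAt hzero huw' ?_
    filter_upwards [hpoint w ▸ hwedgew hr] with x hx hFx a
    have hscale : wedgeFst f F a (r • u) x = r * wedgeFst f F a u x := by
      simp only [wedgeFst, map_smul, smul_eq_mul]
      ring
    rw [hscale, hx hFx a, mul_zero]

lemma exists_second_integral (S : IsStrictTransform k p q F Φ) {f : V → ℂ}
    (hf : AnalyticAt ℂ f 0)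
    (hwedge : ∀ a b, ∀ ξ ∈ puncturedCone p q, VanishesNear Φ (wedgeFst f F a b) ξ) :
    ∃ g : V → ℂ, AnalyticAt ℂ g 0 ∧
      ∀ ξ ∈ puncturedCone p q, VanishesNear Φ (fun x => f x.1 - g x.2) ξ := by
  obtain ⟨l, hl0, hl⟩ := S.left.exists_zero
  obtain ⟨u, hu⟩ := S.left.exists_fderiv_ne_zero l hl0
  have hcone : (l, 0) ∈ puncturedCone p q :=
    ⟨fun h => hl0 (congrArg Prod.fst h), by simp [hl, S.right.apply_zero]⟩
  have hu' : fderiv ℂ Φ (0, (l, 0)) (0, (u, 0)) ≠ 0 := by simpa [S.fderiv_zero] using hu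
  obtain ⟨σ, hσ, hσ0, hsec⟩ := S.exists_blowupGraph hcone hu' (.inr ℂ V V)
  have hfst : ∀ᶠ x in 𝓝 (0 : V × V), AnalyticAt ℂ f x.1 :=
    continuousAt_fst.eventually hf.eventually_analyticAt
  obtain ⟨W, hW, hcont⟩ := S.exists_nhds_vanishesNear hcone hu' (.snd ℂ V V) rfl rfl hfst
  obtain ⟨δ, hδ, hslice⟩ := S.exists_pos_forall_slice_snd hcone hu' hf
    (fun a => hwedge a u _ hcone) hσ hσ0 hsec hW
  obtain ⟨r, hr', hrδ⟩ := NormedField.exists_norm_lt ℂ hδ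
  have hr : r ≠ 0 := norm_pos_iff.1 hr'
  replace hslice := hslice r hr hrδ
  obtain ⟨hg, ⟨hWr, hΦr⟩, hvan⟩ := hslice 0 (by simpa using mul_pos hr' hδ)
  have hsub : ∀ x : V × V, AnalyticAt ℂ f x.1 →
      AnalyticAt ℂ (fun w => f (r • l + slice σ r w • r • u)) x.2 →
      AnalyticAt ℂ (fun x : V × V => f x.1 - f (r • l + slice σ r x.2 • r • u)) x :=
    fun x hf hg => (AnalyticAt.fun_comp (g := f) hf analyticAt_fst).sub
      (AnalyticAt.fun_comp (g := fun w => f (r • l + slice σ r w • r • u)) hg analyticAt_snd)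
  refine ⟨_, hg, fun ξ hξ => S.vanishesNear_of_mem_puncturedCone (hsub 0 hf hg) hcone ?_ hξ⟩
  refine hcont r hr δ hδ _ (fun x hfx hx => hsub x hfx (hslice x.2 hx).1) _ hWr ?_ hΦr hvan
  simpa [blowupGraph] using hδ

end IsStrictTransform

end SecondIntegral

/-! ### Leading forms of the first integrals -/

section LeadingForm

variable {V : Type*} [NormedAddCommGroup V] [NormedSpace ℂ V] {f g φ ψ : V → ℂ} {j k : ℕ}

/-- `φ` is the degree `j` part of `f` at the origin, for `f` without terms of lower degree: it is
the restriction of `f(r ξ) / r ^ j` to the exceptional divisor of the blow-up. -/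
def HasLeadingForm (j : ℕ) (f φ : V → ℂ) : Prop :=
  ∀ ξ, Tendsto (fun y : ℂ × V => (y.1 ^ j)⁻¹ * f (y.1 • y.2)) (𝓝[{y | y.1 ≠ 0}] (0, ξ)) (𝓝 (φ ξ))

lemma VanishesToOrder.exists_hasLeadingForm (hf : VanishesToOrder ℂ j f) :
    ∃ φ, HasLeadingForm j f φ ∧ (∀ (t : ℂ) z, φ (t • z) = t ^ j * φ z) ∧
      ((∀ z, φ z = 0) → VanishesToOrder ℂ (j + 1) f) := by
  obtain ⟨s, hs, hs0⟩ := hf.exists_series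
  obtain ⟨B, hB, hrel, hBs⟩ := exists_blowup (j := j) hs fun m hm x => by simp [hs0 m hm]
  refine ⟨fun ξ => B (0, ξ), fun ξ => ?_, fun t z => ?_,
    fun hzero => vanishesToOrder_of_diag hs fun m hm x => ?_⟩
  · refine ((hB ξ).continuousAt.tendsto.mono_left nhdsWithin_le_nhds).congr' ?_
    filter_upwards [nhdsWithin_le_nhds (hrel ξ), self_mem_nhdsWithin] with y hy hy0
    rw [hy, smul_eq_mul, inv_mul_cancel_left₀ (pow_ne_zero j hy0)]
  · simpa [hBs] using (s j).map_smul_univ (fun _ => t) fun _ => z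
  · rcases Nat.lt_succ_iff_lt_or_eq.1 hm with hlt | rfl
    · simp [hs0 m hlt]
    · exact (hBs x).symm.trans (hzero x)

namespace HasLeadingForm

lemma sub_const_mul (hf : HasLeadingForm j f φ) (hg : HasLeadingForm j g ψ) (c : ℂ) :
    HasLeadingForm j (fun z => f z - c * g z) fun z => φ z - c * ψ z := fun ξ =>
  ((hf ξ).sub ((hg ξ).const_mul c)).congr fun y => by ring

lemma eq_of_tendsto {ι : Type*} {l : Filter ι} [l.NeBot] (hf : HasLeadingForm j f φ)
    (hg : HasLeadingForm j g ψ) {r : ι → ℂ} {γ γ' : ι → V} {z w : V}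
    (hz : Tendsto (fun i => (r i, γ i)) l (𝓝 (0, z)))
    (hw : Tendsto (fun i => (r i, γ' i)) l (𝓝 (0, w))) (hr : ∀ᶠ i in l, r i ≠ 0)
    (heq : ∀ᶠ i in l, f (r i • γ i) = g (r i • γ' i)) : φ z = ψ w := by
  have hφ := (hf z).comp (tendsto_nhdsWithin_iff.2 ⟨hz, hr⟩)
  have hψ := (hg w).comp (tendsto_nhdsWithin_iff.2 ⟨hw, hr⟩)
  refine tendsto_nhds_unique hφ (hψ.congr' (heq.mono fun i hi => ?_))
  simp only [Function.comp_apply, hi]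

lemma vanishesToOrder_succ (h : HasLeadingForm j f φ) (hf : VanishesToOrder ℂ j f)
    (hφ : ∀ z, φ z = 0) : VanishesToOrder ℂ (j + 1) f := by
  obtain ⟨ψ, hψ, -, hsucc⟩ := hf.exists_hasLeadingForm
  have hline : ∀ z : V, Tendsto (fun r : ℂ => (r, z)) (𝓝[≠] 0) (𝓝 (0, z)) := fun z =>
    ((Continuous.prodMk_left z).tendsto 0).mono_left nhdsWithin_le_nhds
  refine hsucc fun z => (hψ.eq_of_tendsto h (hline z) (hline z) self_mem_nhdsWithin ?_).trans
    (hφ z)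
  exact .of_forall fun _ => rfl

end HasLeadingForm

namespace IsIsolatedForm

variable {p : V → ℂ}

lemma hasLeadingForm (hp : IsIsolatedForm k p) : HasLeadingForm k p p := fun ξ => by
  have hcont : Tendsto (fun y : ℂ × V => p y.2) (𝓝[{y | y.1 ≠ 0}] (0, ξ)) (𝓝 (p ξ)) :=
    ((hp.analyticAt ξ).continuousAt.tendsto.comp (continuous_snd.tendsto ((0 : ℂ), ξ))).mono_left
      nhdsWithin_le_nhds
  refine hcont.congr' ?_
  filter_upwards [self_mem_nhdsWithin] with y hy
  rw [hp.map_smul, inv_mul_cancel_left₀ (pow_ne_zero k hy)]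

lemma vanishesToOrder (hp : IsIsolatedForm k p) : VanishesToOrder ℂ k p where
  analyticAt := hp.analyticAt 0
  isBigO := by
    obtain ⟨δ, hδ, hball⟩ := Metric.eventually_nhds_iff_ball.1
      ((hp.analyticAt 0).continuousAt.norm.eventually_lt_const (u := 1) (by simp [hp.apply_zero]))
    refine .of_bound ((2 / δ) ^ k) (.of_forall fun z => ?_)
    rcases eq_or_ne z 0 with rfl | hz
    · simpa [hp.apply_zero] using by positivity
    set s : ℂ := ((2 / δ * ‖z‖ : ℝ) : ℂ) with hs_def
    have hs : ‖s‖ = 2 / δ * ‖z‖ := by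
      rw [hs_def, Complex.norm_real, Real.norm_of_nonneg (by positivity)]
    have hs0 : s ≠ 0 := norm_pos_iff.1 (by rw [hs]; positivity)
    have hunit : ‖p (s⁻¹ • z)‖ < 1 := hball _ <| by
      rw [mem_ball_zero_iff, norm_smul, norm_inv, hs]
      field_simp
      norm_num
    calc ‖p z‖ = ‖s‖ ^ k * ‖p (s⁻¹ • z)‖ := by
          rw [← norm_pow, ← norm_mul, ← hp.map_smul, smul_inv_smul₀ hs0]
      _ ≤ ‖s‖ ^ k * 1 := by gcongr
      _ = (2 / δ) ^ k * ‖‖z‖ ^ k‖ := by rw [hs]; simp [mul_pow]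

lemma vanishesToOrder_sub_const_mul (hp : IsIsolatedForm k p) (hf : VanishesToOrder ℂ k f)
    {c : ℂ} (h : HasLeadingForm k f fun z => c * p z) :
    VanishesToOrder ℂ (k + 1) fun z => f z - c * p z :=
  (h.sub_const_mul hp.hasLeadingForm c).vanishesToOrder_succ
    (hf.sub (hp.vanishesToOrder.const_smul c)) fun _ => sub_self _

end IsIsolatedForm

end LeadingForm

section LeadingPair

variable {V : Type*} [NormedAddCommGroup V] [NormedSpace ℂ V] {j k : ℕ} {p q φ ψ f g : V → ℂ}

lemma IsIsolatedForm.exists_ne_zero_apply_eq (hp : IsIsolatedForm k p) (c : ℂ) :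
    ∃ z ≠ 0, p z = c := by
  rcases eq_or_ne c 0 with rfl | hc
  · exact hp.exists_zero
  · obtain ⟨z, rfl⟩ := hp.surjective c
    exact ⟨z, fun hz => hc (hz ▸ hp.apply_zero), rfl⟩

lemma apply_eq_of_eqOn_puncturedCone (hq : IsIsolatedForm k q)
    (heq : ∀ ξ ∈ puncturedCone p q, φ ξ.1 = ψ ξ.2) {z z' : V} (hz : p z = p z') :
    φ z = φ z' := by
  obtain ⟨w, hw0, hw⟩ := hq.exists_ne_zero_apply_eq (-p z)
  have hne : ∀ x : V, (x, w) ≠ 0 := fun x h => hw0 (congrArg Prod.snd h)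
  rw [heq (z, w) ⟨hne z, by simp [hw]⟩, heq (z', w) ⟨hne z', by simp [hw, hz]⟩]

lemma exists_apply_eq_of_eqOn_puncturedCone (hp : IsIsolatedForm k p)
    (heq : ∀ ξ ∈ puncturedCone p q, φ ξ.1 = ψ ξ.2) (w : V) :
    ∃ z, p z = -q w ∧ ψ w = φ z := by
  obtain ⟨z, hz0, hz⟩ := hp.exists_ne_zero_apply_eq (-q w)
  exact ⟨z, hz, (heq (z, w) ⟨fun h => hz0 (congrArg Prod.fst h), by simp [hz]⟩).symm⟩

/-- `φ` is invariant under multiplication by a primitive `k`-th root of unity, as `p` is. -/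
lemma eq_zero_of_eqOn_puncturedCone (hp : IsIsolatedForm k p) (hq : IsIsolatedForm k q)
    (hφ : ∀ (t : ℂ) z, φ (t • z) = t ^ j * φ z)
    (heq : ∀ ξ ∈ puncturedCone p q, φ ξ.1 = ψ ξ.2) (hj : 0 < j) (hjk : j < k) :
    (∀ z, φ z = 0) ∧ ∀ w, ψ w = 0 := by
  have hζ := Complex.isPrimitiveRoot_exp k hp.pos.ne'
  set ζ := Complex.exp (2 * Real.pi * Complex.I / k)
  have hφ0 : ∀ z, φ z = 0 := fun z => by
    have hinv : ζ ^ j * φ z = φ z := by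
      rw [← hφ]
      exact apply_eq_of_eqOn_puncturedCone hq heq (by rw [hp.map_smul, hζ.pow_eq_one, one_mul])
    by_contra hz
    exact hζ.pow_ne_one_of_pos_of_lt hj.ne' hjk ((mul_eq_right₀ hz).1 hinv)
  refine ⟨hφ0, fun w => ?_⟩
  obtain ⟨z, -, hz⟩ := exists_apply_eq_of_eqOn_puncturedCone hp heq w
  rw [hz, hφ0]

lemma exists_const_of_eqOn_puncturedCone (hp : IsIsolatedForm k p) (hq : IsIsolatedForm k q)
    (hφ : ∀ (t : ℂ) z, φ (t • z) = t ^ k * φ z)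
    (heq : ∀ ξ ∈ puncturedCone p q, φ ξ.1 = ψ ξ.2) :
    ∃ c, (∀ z, φ z = c * p z) ∧ ∀ w, ψ w = -c * q w := by
  obtain ⟨e, he⟩ := hp.surjective 1
  have hφp : ∀ z, φ z = φ e * p z := fun z => by
    obtain ⟨t, ht⟩ := IsAlgClosed.exists_pow_nat_eq (p z) hp.pos
    have hte : p z = p (t • e) := by rw [hp.map_smul, he, mul_one, ht]
    rw [apply_eq_of_eqOn_puncturedCone hq heq hte, hφ, ht, mul_comm]
  refine ⟨φ e, hφp, fun w => ?_⟩
  obtain ⟨z, hz, hψ⟩ := exists_apply_eq_of_eqOn_puncturedCone hp heq w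
  rw [hψ, hφp, hz, mul_neg, neg_mul]

lemma vanishesToOrder_one (hf : AnalyticAt ℂ f 0) (hf0 : f 0 = 0) : VanishesToOrder ℂ 1 f :=
  ⟨hf, by simpa [hf0] using hf.differentiableAt.isBigO_sub.norm_right⟩

namespace IsStrictTransform

variable [CompleteSpace V] {F : V × V → ℂ} {Φ : ℂ × V × V → ℂ}

lemma exists_curve (S : IsStrictTransform k p q F Φ) {ξ : V × V} (hξ : ξ ∈ puncturedCone p q) :
    ∃ γ : ℂ → V × V, Tendsto (fun r => (r, γ r)) (𝓝 0) (𝓝 (0, ξ)) ∧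
      ∀ᶠ r in 𝓝 0, Φ (r, γ r) = 0 := by
  obtain ⟨η, hη⟩ := S.exists_fderiv_ne_zero hξ.1
  obtain ⟨τ, hτ, hτ0, hcurve⟩ := exists_implicit (S.analyticAt_transform ξ)
    (S.eq_zero_of_mem_puncturedCone hξ) hη (.inl ℂ ℂ (V × V))
  refine ⟨fun r => ξ + τ r • η, ?_, by simpa using hcurve⟩
  have hcont : ContinuousAt (fun r => (r, ξ + τ r • η)) 0 := by
    have := hτ.continuousAt
    fun_prop
  simpa [hτ0] using hcont.tendsto

lemma leadingForm_eq (S : IsStrictTransform k p q F Φ) (hf : HasLeadingForm j f φ)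
    (hg : HasLeadingForm j g ψ) {ξ : V × V} (hξ : ξ ∈ puncturedCone p q)
    (hfg : VanishesNear Φ (fun x => f x.1 - g x.2) ξ) : φ ξ.1 = ψ ξ.2 := by
  obtain ⟨γ, hγ, hΦ⟩ := S.exists_curve hξ
  have hγ' : Tendsto (fun r => (r, γ r)) (𝓝[≠] 0) (𝓝 (0, ξ)) := hγ.mono_left nhdsWithin_le_nhds
  have hr := (continuous_fst.tendsto ((0 : ℂ), ξ)).comp hγ'
  have hξγ := (continuous_snd.tendsto ((0 : ℂ), ξ)).comp hγ'
  refine hf.eq_of_tendsto hg (hr.prodMk_nhds hξγ.fst_nhds) (hr.prodMk_nhds hξγ.snd_nhds)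
    self_mem_nhdsWithin ?_
  filter_upwards [hγ'.eventually hfg, nhdsWithin_le_nhds hΦ] with r hzero hΦr
  exact sub_eq_zero.1 (hzero hΦr)

lemma vanishesToOrder_of_vanishesNear (S : IsStrictTransform k p q F Φ) (hf : AnalyticAt ℂ f 0)
    (hg : AnalyticAt ℂ g 0) (hf0 : f 0 = 0) (hg0 : g 0 = 0)
    (hfg : ∀ ξ ∈ puncturedCone p q, VanishesNear Φ (fun x => f x.1 - g x.2) ξ) :
    VanishesToOrder ℂ k f ∧ VanishesToOrder ℂ k g := by
  suffices ∀ j, 1 ≤ j → j ≤ k → VanishesToOrder ℂ j f ∧ VanishesToOrder ℂ j g from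
    this k S.left.pos le_rfl
  intro j hj
  induction j, hj using Nat.le_induction with
  | base => exact fun _ => ⟨vanishesToOrder_one hf hf0, vanishesToOrder_one hg hg0⟩
  | succ j hj ih =>
    intro hjk
    obtain ⟨hfj, hgj⟩ := ih (Nat.le_of_succ_le hjk)
    obtain ⟨φ, hφ, hφhom, hfsucc⟩ := hfj.exists_hasLeadingForm
    obtain ⟨ψ, hψ, -, hgsucc⟩ := hgj.exists_hasLeadingForm
    obtain ⟨hφ0, hψ0⟩ := eq_zero_of_eqOn_puncturedCone S.left S.right hφhom
      (fun ξ hξ => S.leadingForm_eq hφ hψ hξ (hfg ξ hξ)) hj hjk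
    exact ⟨hfsucc hφ0, hgsucc hψ0⟩

lemma exists_const_of_vanishesNear (S : IsStrictTransform k p q F Φ) (hf : AnalyticAt ℂ f 0)
    (hg : AnalyticAt ℂ g 0) (hf0 : f 0 = 0) (hg0 : g 0 = 0)
    (hfg : ∀ ξ ∈ puncturedCone p q, VanishesNear Φ (fun x => f x.1 - g x.2) ξ) :
    ∃ c : ℂ, VanishesToOrder ℂ (k + 1) (fun z => f z - c * p z) ∧
      VanishesToOrder ℂ (k + 1) fun w => g w - -c * q w := by
  obtain ⟨hfk, hgk⟩ := S.vanishesToOrder_of_vanishesNear hf hg hf0 hg0 hfg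
  obtain ⟨φ, hφ, hφhom, -⟩ := hfk.exists_hasLeadingForm
  obtain ⟨ψ, hψ, -, -⟩ := hgk.exists_hasLeadingForm
  obtain ⟨c, hφc, hψc⟩ := exists_const_of_eqOn_puncturedCone S.left S.right hφhom
    fun ξ hξ => S.leadingForm_eq hφ hψ hξ (hfg ξ hξ)
  rw [funext hφc] at hφ
  rw [funext hψc] at hψ
  exact ⟨c, S.left.vanishesToOrder_sub_const_mul hfk hφ,
    S.right.vanishesToOrder_sub_const_mul hgk hψ⟩

end IsStrictTransform

end LeadingPair

section Semicontinuity

lemma vanishesToOrder_iff_iteratedDeriv {N : ℕ} {h : ℂ → ℂ} (hh : AnalyticAt ℂ h 0) :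
    VanishesToOrder ℂ N h ↔ ∀ i < N, iteratedDeriv i h 0 = 0 := by
  have hdiag : ∀ i (s : ℂ), FormalMultilinearSeries.ofScalars ℂ
      (fun n => iteratedDeriv n h 0 / n.factorial) i (fun _ => s) =
        iteratedDeriv i h 0 / i.factorial * s ^ i := fun i s => by
    simp [mul_comm]
  refine ⟨fun hN i hi => ?_, fun hzero => vanishesToOrder_of_diag hh.hasFPowerSeriesAt ?_⟩
  · have hcoeff := diag_eq_zero_of_isBigO hh.hasFPowerSeriesAt hN.isBigO i hi 1
    simpa [hdiag, Nat.factorial_ne_zero] using hcoeff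
  · intro i hi s
    rw [hdiag, hzero i hi, zero_div, zero_mul]

lemma exists_iteratedDeriv_snd {T : ℂ × ℂ → ℂ} (hT : AnalyticAt ℂ T 0) (i : ℕ) :
    ∃ D : ℂ × ℂ → ℂ, AnalyticAt ℂ D 0 ∧
      ∀ᶠ y in 𝓝 (0 : ℂ × ℂ), iteratedDeriv i (fun s => T (y.1, s)) y.2 = D y := by
  induction i with
  | zero => exact ⟨T, hT, by simp⟩
  | succ i ih =>
    obtain ⟨D, hD, hDi⟩ := ih
    refine ⟨fun y => fderiv ℂ D y (0, 1),
      ((ContinuousLinearMap.apply ℂ ℂ ((0 : ℂ), (1 : ℂ))).analyticAt _).fun_comp hD.fderiv, ?_⟩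
    filter_upwards [hDi.eventually_nhds, hD.eventually_analyticAt] with y hDy hDan
    have hline : HasDerivAt (fun s : ℂ => (y.1, s)) (0, 1) y.2 :=
      (hasDerivAt_const _ _).prodMk (hasDerivAt_id _)
    have hderiv : HasDerivAt (fun s : ℂ => D (y.1, s)) (fderiv ℂ D y (0, 1)) y.2 :=
      hDan.differentiableAt.hasFDerivAt.comp_hasDerivAt_of_eq _ hline rfl
    rw [iteratedDeriv_succ]
    exact (hderiv.congr_of_eventuallyEq (hline.continuousAt.eventually hDy)).deriv

lemma vanishesToOrder_of_eventually_nhdsNE {T : ℂ × ℂ → ℂ} (hT : AnalyticAt ℂ T 0) {N : ℕ}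
    (h : ∀ᶠ r in 𝓝[≠] (0 : ℂ), VanishesToOrder ℂ N fun s => T (r, s)) :
    VanishesToOrder ℂ N fun s => T (0, s) := by
  have hT0 : AnalyticAt ℂ (fun s => T (0, s)) 0 :=
    AnalyticAt.fun_comp (f := fun s => ((0 : ℂ), s)) hT (analyticAt_const.prod analyticAt_id)
  refine (vanishesToOrder_iff_iteratedDeriv hT0).2 fun i hi => ?_
  obtain ⟨D, hD, hDi⟩ := exists_iteratedDeriv_snd hT i
  have haxis : Tendsto (fun r : ℂ => (r, (0 : ℂ))) (𝓝[≠] 0) (𝓝 0) :=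
    ((Continuous.prodMk_left (0 : ℂ)).tendsto 0).mono_left nhdsWithin_le_nhds
  have hDzero : ∀ᶠ r in 𝓝[≠] (0 : ℂ), 0 = D (r, 0) := by
    filter_upwards [h, haxis.eventually hDi] with r hr hDr
    rw [← hDr, (vanishesToOrder_iff_iteratedDeriv hr.analyticAt).1 hr i hi]
  exact hDi.self_of_nhds.trans
    (tendsto_nhds_unique (hD.continuousAt.tendsto.comp haxis) (tendsto_const_nhds.congr' hDzero))

end Semicontinuity

section Pair

variable {V : Type*} [NormedAddCommGroup V] [NormedSpace ℂ V] {k : ℕ} {p q : V → ℂ}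

lemma not_isBigO_of_pow_add_eq_zero {m u : V} (hq : DifferentiableAt ℂ q m) (hm : q m = 0)
    {h : ℂ → ℂ} (hh : Tendsto h (𝓝 0) (𝓝 0)) (heq : ∀ᶠ s in 𝓝 0, s ^ k + q (m + h s • u) = 0) :
    ¬ h =O[𝓝 0] fun s => s ^ (k + 1) := fun hO => by
  have hline : DifferentiableAt ℂ (fun s : ℂ => q (m + s • u)) 0 :=
    DifferentiableAt.comp (0 : ℂ) (g := q) (by simpa using hq) (by fun_prop)
  have hqO : (fun s : ℂ => q (m + s • u)) =O[𝓝 0] fun s => s := by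
    simpa [hm] using hline.isBigO_sub
  have hpow : (fun s : ℂ => s ^ k) =O[𝓝 0] fun s => s ^ (k + 1) :=
    ((hqO.comp_tendsto hh).neg_left.congr'
      (heq.mono fun s hs => (eq_neg_of_add_eq_zero_left hs).symm) EventuallyEq.rfl).trans hO
  have hne : ∃ᶠ s in 𝓝[≠] (0 : ℂ), s ^ k ≠ 0 :=
    Eventually.frequently <| eventually_mem_nhdsWithin.mono fun s hs => pow_ne_zero k hs
  exact Asymptotics.isLittleO_irrefl (hne.filter_mono nhdsWithin_le_nhds)
    (hpow.trans_isLittleO (Asymptotics.isLittleO_pow_pow k.lt_succ_self))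

lemma vanishesToOrder_of_eventually_slice {τ : ℂ × V → ℂ} (hτ : AnalyticAt ℂ τ 0) (hτ0 : τ 0 = 0)
    {N : ℕ} (h : ∀ᶠ r in 𝓝[≠] (0 : ℂ), VanishesToOrder ℂ N fun z => slice τ r z - slice τ r 0)
    (e : V) :
    VanishesToOrder ℂ N fun s : ℂ => τ (0, s • e) := by
  have hT : AnalyticAt ℂ (fun y : ℂ × ℂ => τ (y.1, y.2 • e) - τ (y.1, 0)) 0 :=
    (AnalyticAt.fun_comp_of_eq (g := τ) hτ
      (analyticAt_fst.prod (analyticAt_snd.fun_smul analyticAt_const)) (by simp)).fun_sub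
    (AnalyticAt.fun_comp_of_eq (g := τ) hτ (analyticAt_fst.prod analyticAt_const) (by simp))
  have hslice : ∀ᶠ r in 𝓝[≠] (0 : ℂ), VanishesToOrder ℂ N fun s : ℂ => τ (r, s • e) - τ (r, 0) := by
    filter_upwards [h, self_mem_nhdsWithin] with r hr hr0
    have hline := hr.comp_continuousLinearMap (ContinuousLinearMap.toSpanSingleton ℂ (r • e))
    have hcoord : ∀ s : ℂ, r⁻¹ • s • r • e = s • e := fun s => by
      rw [smul_comm s r, inv_smul_smul₀ hr0]
    simpa [slice, hcoord] using hline
  have h0 : τ (0, 0) = 0 := hτ0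
  simpa [h0] using vanishesToOrder_of_eventually_nhdsNE hT hslice

namespace IsStrictTransform

variable {F : V × V → ℂ} {Φ : ℂ × V × V → ℂ}

/-- Otherwise `h(s) = τ(0, s e)`, where `p e = 1`, would be `O(s ^ (k + 1))` by semicontinuity of
the order of vanishing, while `s ^ k + q(m + h(s) u) = 0`. -/
lemma frequently_not_vanishesToOrder_slice (S : IsStrictTransform k p q F Φ) {m u : V}
    (hm : q m = 0) {τ : ℂ × V → ℂ} (hτ : AnalyticAt ℂ τ 0) (hτ0 : τ 0 = 0)
    (hsec : ∀ᶠ x in 𝓝 0, Φ (blowupGraph (0, m) (0, u) (.inl ℂ V V) τ x) = 0) :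
    ∃ᶠ r in 𝓝[≠] 0, ¬ VanishesToOrder ℂ (k + 1) fun z => slice τ r z - slice τ r 0 := by
  intro hcon
  simp only [not_not] at hcon
  obtain ⟨e, he⟩ := S.left.surjective 1
  have hline : Tendsto (fun s : ℂ => ((0 : ℂ), s • e)) (𝓝 0) (𝓝 0) := by
    have hcont : Continuous fun s : ℂ => ((0 : ℂ), s • e) := by fun_prop
    simpa using! hcont.tendsto 0
  have hh : Tendsto (fun s : ℂ => τ (0, s • e)) (𝓝 0) (𝓝 0) := by
    simpa [hτ0, Function.comp_def] using hτ.continuousAt.tendsto.comp hline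
  refine not_isBigO_of_pow_add_eq_zero (k := k) (u := u) (S.right.analyticAt m).differentiableAt
    hm hh ?_ ?_
  · filter_upwards [hline.eventually hsec] with s hs
    simpa [blowupGraph, S.apply_zero, S.left.map_smul, he] using hs
  · refine (vanishesToOrder_of_eventually_slice hτ hτ0 hcon e).isBigO.trans ?_
    simpa only [← norm_pow] using (Asymptotics.isBigO_refl _ _).norm_left

variable [CompleteSpace V]

lemma exists_first_integrals (S : IsStrictTransform k p q F Φ)
    (hlevi : ∀ ξ ∈ puncturedCone p q, ∀ a b a' b', VanishesNear Φ (polarLevi F a b a' b') ξ) :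
    ∃ f g : V → ℂ, AnalyticAt ℂ f 0 ∧ AnalyticAt ℂ g 0 ∧ f 0 = 0 ∧ g 0 = 0 ∧
      ¬ VanishesToOrder ℂ (k + 1) f ∧
      ∀ ξ ∈ puncturedCone p q, VanishesNear Φ (fun x => f x.1 - g x.2) ξ := by
  obtain ⟨m, hm0, hm⟩ := S.right.exists_zero
  obtain ⟨u, hu⟩ := S.right.exists_fderiv_ne_zero m hm0
  have hcone : (0, m) ∈ puncturedCone p q :=
    ⟨fun h => hm0 (congrArg Prod.snd h), by simp [hm, S.left.apply_zero]⟩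
  have hu' : fderiv ℂ Φ (0, (0, m)) (0, (0, u)) ≠ 0 := by simpa [S.fderiv_zero] using hu
  obtain ⟨τ, hτ, hτ0, hsec⟩ := S.exists_blowupGraph hcone hu' (.inl ℂ V V)
  obtain ⟨r, hord, hf, hwedge⟩ := ((S.frequently_not_vanishesToOrder_slice hm hτ hτ0
    hsec).and_eventually
      (S.eventually_vanishesNear_wedgeFst hcone hu' (hlevi _ hcone) hτ hτ0 hsec)).exists
  obtain ⟨g, hg, hfg⟩ := S.exists_second_integral hf hwedge
  have hconst : slice τ r 0 = g 0 := by
    simpa [sub_eq_zero] using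
      (hfg _ hcone).self_of_nhds (S.eq_zero_of_mem_puncturedCone hcone)
  refine ⟨fun z => slice τ r z - slice τ r 0, fun w => g w - g 0, hf.fun_sub analyticAt_const,
    hg.fun_sub analyticAt_const, sub_self _, sub_self _, hord, fun ξ hξ => ?_⟩
  simpa only [VanishesNear, hconst, sub_sub_sub_cancel_right] using hfg ξ hξ

lemma exists_normalized_first_integrals (S : IsStrictTransform k p q F Φ)
    (hlevi : ∀ ξ ∈ puncturedCone p q, ∀ a b a' b', VanishesNear Φ (polarLevi F a b a' b') ξ) :
    ∃ f g : V → ℂ, VanishesToOrder ℂ (k + 1) (fun z => f z - p z) ∧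
      VanishesToOrder ℂ (k + 1) (fun w => g w + q w) ∧
      ∀ ξ ∈ puncturedCone p q, VanishesNear Φ (fun x => f x.1 - g x.2) ξ := by
  obtain ⟨f, g, hf, hg, hf0, hg0, hord, hfg⟩ := S.exists_first_integrals hlevi
  obtain ⟨c, hfc, hgc⟩ := S.exists_const_of_vanishesNear hf hg hf0 hg0 hfg
  have hc : c ≠ 0 := by
    rintro rfl
    exact hord (by simpa using hfc)
  refine ⟨fun z => c⁻¹ * f z, fun w => c⁻¹ * g w, ?_, ?_, fun ξ hξ => ?_⟩
  · convert hfc.const_smul c⁻¹ using 2 with z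
    rw [smul_eq_mul, mul_sub, inv_mul_cancel_left₀ hc]
  · convert hgc.const_smul c⁻¹ using 2 with w
    rw [smul_eq_mul, mul_sub, neg_mul, mul_neg, inv_mul_cancel_left₀ hc, sub_neg_eq_add]
  · filter_upwards [hfg ξ hξ] with y hy hΦ
    rw [← mul_sub, hy hΦ, mul_zero]

end IsStrictTransform

end Pair

/-! ### Comparison of hypersurfaces with the same leading form -/

lemma eventually_eq_zero_of_common_transversal {𝕜 Y : Type*} [RCLike 𝕜] [NormedAddCommGroup Y]
    [NormedSpace 𝕜 Y] [CompleteSpace Y] {Φ Ψ : Y → 𝕜} {y₀ v : Y} (hΦ : AnalyticAt 𝕜 Φ y₀)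
    (hΨ : AnalyticAt 𝕜 Ψ y₀) (hΦ0 : Φ y₀ = 0) (hΨ0 : Ψ y₀ = 0) (hΦv : fderiv 𝕜 Φ y₀ v ≠ 0)
    (hΨv : fderiv 𝕜 Ψ y₀ v ≠ 0) {Q : Y → Prop} (hQ : ∀ y (t : 𝕜), Q y → Q (y + t • v))
    (hsub : ∀ᶠ y in 𝓝 y₀, Q y → Φ y = 0 → Ψ y = 0) :
    ∀ᶠ y in 𝓝 y₀, Q y → Ψ y = 0 → Φ y = 0 := by
  obtain ⟨κ, hκ⟩ := exists_isRetractionAt hΦ hΦ0 hΦv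
  obtain ⟨κ', hκ'⟩ := exists_isRetractionAt hΨ hΨ0 hΨv
  have hgraph : Tendsto (fun y => (y, κ y)) (𝓝 y₀) (𝓝 (y₀, 0)) := by
    simpa [hκ.apply_self] using
      continuousAt_id.tendsto.prodMk_nhds hκ.analyticAt.continuousAt.tendsto
  filter_upwards [hκ.eventually_apply_eq_zero, hκ.tendsto.eventually hsub,
    hgraph.eventually hκ'.eventually_iff, hκ'.eventually_eq_zero]
    with y hΦy hsuby hiff hzero hQy hΨy
  have hκy : κ y = 0 := (hiff.1 (hsuby (hQ y _ hQy) hΦy)).symm.trans (hzero hΨy)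
  simpa [hκy] using hΦy

section Comparison

variable {V : Type*} [NormedAddCommGroup V] [NormedSpace ℂ V] {k : ℕ} {p q : V → ℂ}
  {F G : V × V → ℂ} {Φ Ψ : ℂ × V × V → ℂ}

lemma exists_isStrictTransform (hp : IsIsolatedForm k p) (hq : IsIsolatedForm k q)
    (hF : VanishesToOrder ℂ (k + 1) fun x => F x - (p x.1 + q x.2)) :
    ∃ Φ, IsStrictTransform k p q F Φ := by
  obtain ⟨s, hs, hs0⟩ := hF.exists_series
  obtain ⟨B, hB, hrel, -⟩ := exists_blowup (j := k + 1) hs fun m hm x => by simp [hs0 m hm]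
  have hpq : ∀ x : V × V, AnalyticAt ℂ (fun x : V × V => p x.1 + q x.2) x := fun x =>
    (AnalyticAt.fun_comp (hp.analyticAt x.1) analyticAt_fst).fun_add
      (AnalyticAt.fun_comp (hq.analyticAt x.2) analyticAt_snd)
  refine ⟨fun y => p y.2.1 + q y.2.2 + y.1 * B y, hp, hq, ?_, fun ξ => ?_, fun ξ => ?_,
    fun ξ => by simp⟩
  · simpa using hF.analyticAt.fun_add (hpq 0)
  · exact (AnalyticAt.fun_comp (f := Prod.snd) (hpq ξ) analyticAt_snd).fun_add
      (analyticAt_fst.fun_mul (hB ξ))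
  · filter_upwards [hrel ξ] with y hy
    simp only [Prod.smul_fst, Prod.smul_snd, hp.map_smul, hq.map_smul, smul_eq_mul] at hy
    linear_combination hy

namespace IsStrictTransform

lemma map_zero (S : IsStrictTransform k p q F Φ) : F 0 = 0 := by
  simpa [S.left.pos.ne'] using (S.eventually_eq 0).self_of_nhds

lemma eventually_apply_eq_zero_iff (S : IsStrictTransform k p q F Φ) (ξ : V × V) :
    ∀ᶠ y in 𝓝 ((0 : ℂ), ξ), y.1 ≠ 0 → (F (y.1 • y.2) = 0 ↔ Φ y = 0) := by
  filter_upwards [S.eventually_eq ξ] with y hy hr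
  rw [hy, mul_eq_zero, or_iff_right (pow_ne_zero k hr)]

/-- On the exceptional divisor both strict transforms restrict to `p(z) + q(w)`, so they have a
common transversal direction. -/
lemma eventually_eq_zero_iff_of_mem_puncturedCone [CompleteSpace V]
    (S : IsStrictTransform k p q F Φ) (T : IsStrictTransform k p q G Ψ) {ξ : V × V}
    (hξ : ξ ∈ puncturedCone p q) (hvan : VanishesNear Φ G ξ) :
    ∀ᶠ y in 𝓝 ((0 : ℂ), ξ), y.1 ≠ 0 → (Φ y = 0 ↔ Ψ y = 0) := by
  obtain ⟨η, hη⟩ := S.exists_fderiv_ne_zero hξ.1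
  have hη' : fderiv ℂ Ψ (0, ξ) (0, η) ≠ 0 := by rwa [T.fderiv_zero, ← S.fderiv_zero]
  have hsub : ∀ᶠ y in 𝓝 ((0 : ℂ), ξ), y.1 ≠ 0 → Φ y = 0 → Ψ y = 0 := by
    filter_upwards [hvan, T.eventually_apply_eq_zero_iff ξ] with y hG hiff hr hΦ
    exact (hiff hr).1 (hG hΦ)
  have hsup := eventually_eq_zero_of_common_transversal (S.analyticAt_transform ξ)
    (T.analyticAt_transform ξ) (S.eq_zero_of_mem_puncturedCone hξ)
    (T.eq_zero_of_mem_puncturedCone hξ) hη hη' (Q := fun y => y.1 ≠ 0)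
    (fun y t hy => by simpa using hy) hsub
  filter_upwards [hsub, hsup] with y h h' hr using ⟨h hr, h' hr⟩

lemma eventually_blowup_eq_zero_iff [CompleteSpace V]
    (S : IsStrictTransform k p q F Φ) (T : IsStrictTransform k p q G Ψ) {ξ : V × V}
    (hξ : ξ ≠ 0) (hvan : ∀ ξ ∈ puncturedCone p q, VanishesNear Φ G ξ) :
    ∀ᶠ y in 𝓝 ((0 : ℂ), ξ), y.1 ≠ 0 → (F (y.1 • y.2) = 0 ↔ G (y.1 • y.2) = 0) := by
  suffices hiff : ∀ᶠ y in 𝓝 ((0 : ℂ), ξ), y.1 ≠ 0 → (Φ y = 0 ↔ Ψ y = 0) by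
    filter_upwards [hiff, S.eventually_apply_eq_zero_iff ξ, T.eventually_apply_eq_zero_iff ξ]
      with y hy hF hG hr
    rw [hF hr, hG hr, hy hr]
  by_cases hcone : p ξ.1 + q ξ.2 = 0
  · exact S.eventually_eq_zero_iff_of_mem_puncturedCone T ⟨hξ, hcone⟩ (hvan ξ ⟨hξ, hcone⟩)
  · filter_upwards [(S.analyticAt_transform ξ).continuousAt.eventually_ne
        (by rwa [S.apply_zero]), (T.analyticAt_transform ξ).continuousAt.eventually_ne
        (by rwa [T.apply_zero])] with y hΦ hΨ _
    exact iff_of_false hΦ hΨ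

/-- The comparison near each direction `ξ` is made uniform by compactness of the unit sphere. -/
lemma eventually_eq_zero_iff [FiniteDimensional ℂ V] (S : IsStrictTransform k p q F Φ)
    (T : IsStrictTransform k p q G Ψ) (hvan : ∀ ξ ∈ puncturedCone p q, VanishesNear Φ G ξ) :
    ∀ᶠ x in 𝓝 0, F x = 0 ↔ G x = 0 := by
  have := FiniteDimensional.complete ℂ V
  have := FiniteDimensional.proper ℂ (V × V)
  have hsphere : ∀ᶠ r in 𝓝 (0 : ℂ), ∀ ξ ∈ Metric.sphere (0 : V × V) 1,
      r ≠ 0 → (F (r • ξ) = 0 ↔ G (r • ξ) = 0) :=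
    (isCompact_sphere 0 1).eventually_forall_of_forall_eventually fun ξ hξ =>
      S.eventually_blowup_eq_zero_iff T (ne_zero_of_mem_unit_sphere ⟨ξ, hξ⟩) hvan
  have hnorm : Tendsto (fun x : V × V => (‖x‖ : ℂ)) (𝓝 0) (𝓝 0) := by
    have hcont : Continuous fun x : V × V => (‖x‖ : ℂ) := by fun_prop
    simpa using hcont.tendsto 0
  filter_upwards [hnorm.eventually hsphere] with x hx
  rcases eq_or_ne x 0 with rfl | hx0
  · rw [S.map_zero, T.map_zero]
  · have hne : (‖x‖ : ℂ) ≠ 0 := Complex.ofReal_ne_zero.2 (norm_ne_zero_iff.2 hx0)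
    simpa only [smul_inv_smul₀ hne] using hx ((‖x‖ : ℂ)⁻¹ • x)
      (by simp [norm_smul, norm_ne_zero_iff.2 hx0]) hne

end IsStrictTransform

end Comparison

section RealPoints

variable {V : Type*} [NormedAddCommGroup V] [NormedSpace ℂ V] [StarAddMonoid V] [StarModule ℂ V]
  [NormedStarGroup V] {k j : ℕ} {p f : V → ℂ} {F G : V × V → ℂ} {Φ : ℂ × V × V → ℂ}

lemma VanishesToOrder.starConj (hf : VanishesToOrder ℂ j f) :
    VanishesToOrder ℂ j (starConj f) where
  analyticAt := analyticAt_starConj (by simpa using hf.analyticAt)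
  isBigO := by
    have hstar : Tendsto (star : V → V) (𝓝 0) (𝓝 0) := by
      simpa using continuous_star.tendsto (0 : V)
    refine .of_norm_left ?_
    simpa [_root_.starConj, Function.comp_def] using (hf.isBigO.comp_tendsto hstar).norm_left

lemma swapStar_mem_puncturedCone {ξ : V × V} (hξ : ξ ∈ puncturedCone p (starConj p)) :
    swapStar V ξ ∈ puncturedCone p (starConj p) := by
  refine ⟨fun h => hξ.1 (Prod.ext ?_ ?_), ?_⟩
  · simpa [swapStar_apply] using congrArg Prod.snd h
  · simpa [swapStar_apply] using congrArg Prod.fst h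
  · rw [← star_eq_zero, ← hξ.2]
    simp [swapStar_apply, starConj, add_comm]

namespace IsStrictTransform

lemma vanishesNear_comp_swapStar (S : IsStrictTransform k p (starConj p) F Φ)
    (hherm : ∀ ξ, F (swapStar V ξ) = star (F ξ)) {ξ : V × V}
    (hvan : VanishesNear Φ G (swapStar V ξ)) : VanishesNear Φ (fun x => G (swapStar V x)) ξ := by
  have hconj : Tendsto (blowupSwapStar V) (𝓝 (0, ξ)) (𝓝 (0, swapStar V ξ)) := by
    simpa [blowupSwapStar_apply] using (blowupSwapStar V).continuous.tendsto (0, ξ)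
  filter_upwards [S.eventually_apply_blowupSwapStar hherm ξ, hconj.eventually hvan]
    with y hstar hG hΦ
  have hsmul : swapStar V (y.1 • y.2) = star y.1 • swapStar V y.2 := map_smulₛₗ (swapStar V) _ _
  rw [hsmul]
  exact hG (by rw [hstar, hΦ, star_zero])

/-- With `f(z) - g(w)` vanishing on the strict transform, the function is
`(f(z) - conj (g (z̄))) / 2`. -/
lemma exists_symmetric_first_integral [CompleteSpace V]
    (S : IsStrictTransform k p (starConj p) F Φ)
    (hherm : ∀ ξ, F (swapStar V ξ) = star (F ξ)) (hlevi : IsPolarizedLeviFlat F) :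
    ∃ f : V → ℂ, VanishesToOrder ℂ (k + 1) (fun z => f z - p z) ∧
      ∀ ξ ∈ puncturedCone p (starConj p),
        VanishesNear Φ (fun x => f x.1 + starConj f x.2) ξ := by
  obtain ⟨f, g, hf, hg, hfg⟩ := S.exists_normalized_first_integrals fun ξ hξ =>
    S.vanishesNear_polarLevi hherm hlevi hξ
  refine ⟨fun z => (f z - starConj g z) / 2, ?_, fun ξ hξ => ?_⟩
  · convert (hf.sub hg.starConj).const_smul (2⁻¹ : ℂ) using 2 with z
    simp only [starConj, star_add, star_star, smul_eq_mul]
    ring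
  · filter_upwards [hfg ξ hξ,
      S.vanishesNear_comp_swapStar hherm (hfg _ (swapStar_mem_puncturedCone hξ))] with y hy hy' hΦ
    have hstar := congrArg star (hy' hΦ)
    simp only [swapStar_apply, star_sub, star_zero] at hstar
    simp only [starConj, star_div₀, star_sub, star_star, star_ofNat]
    linear_combination (hy hΦ + hstar) / 2

theorem exists_eventually_eq_zero_iff_re_eq_zero [FiniteDimensional ℂ V]
    (S : IsStrictTransform k p (starConj p) F Φ)
    (hherm : ∀ ξ, F (swapStar V ξ) = star (F ξ)) (hlevi : IsPolarizedLeviFlat F) :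
    ∃ f : V → ℂ, VanishesToOrder ℂ (k + 1) (fun z => f z - p z) ∧
      ∀ᶠ z in 𝓝 0, F (z, star z) = 0 ↔ (f z).re = 0 := by
  have := FiniteDimensional.complete ℂ V
  obtain ⟨f, hf, hvan⟩ := S.exists_symmetric_first_integral hherm hlevi
  have hG : VanishesToOrder ℂ (k + 1) fun x : V × V =>
      f x.1 + starConj f x.2 - (p x.1 + starConj p x.2) := by
    convert (hf.comp_continuousLinearMap (.fst ℂ V V)).sub
      ((hf.starConj.const_smul (-1)).comp_continuousLinearMap (.snd ℂ V V)) using 2 with x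
    simp only [starConj, star_sub, ContinuousLinearMap.coe_fst', ContinuousLinearMap.coe_snd',
      smul_eq_mul]
    ring
  obtain ⟨Ψ, T⟩ := exists_isStrictTransform S.left S.right hG
  refine ⟨f, hf, ?_⟩
  filter_upwards [tendsto_prodMk_star.eventually (S.eventually_eq_zero_iff T hvan)] with z hz
  rw [hz, starConj, star_star, Complex.star_def, Complex.add_conj, Complex.ofReal_eq_zero,
    mul_eq_zero, or_iff_right two_ne_zero]

end IsStrictTransform

end RealPoints

/-! ### Wirtinger derivatives and polarization -/

section Wirtinger

variable {n : ℕ} {z : Fin n → ℂ} {g : (Fin n → ℂ) → ℂ} {G : (Fin n → ℂ) × (Fin n → ℂ) → ℂ}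

lemma hasFDerivAt_of_polarization (hG : AnalyticAt ℂ G (z, star z))
    (hg : ∀ᶠ x in 𝓝 z, g x = G (x, star x)) :
    HasFDerivAt g (((fderiv ℂ G (z, star z)).restrictScalars ℝ).comp
      ((ContinuousLinearMap.id ℝ _).prod (starL' ℝ : (Fin n → ℂ) ≃L[ℝ] (Fin n → ℂ)))) z :=
  ((hG.differentiableAt.hasFDerivAt.restrictScalars ℝ).comp z
    (ContinuousLinearMap.hasFDerivAt _)).congr_of_eventuallyEq hg

lemma fderiv_of_polarization (hG : AnalyticAt ℂ G (z, star z))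
    (hg : ∀ᶠ x in 𝓝 z, g x = G (x, star x)) (v : Fin n → ℂ) :
    fderiv ℝ g z v = fderivFst G (z, star z) v + fderivSnd G (z, star z) (star v) := by
  rw [(hasFDerivAt_of_polarization hG hg).fderiv, fderivFst, fderivSnd]
  simp [← map_add]

lemma fderiv_single_I_of_polarization (hG : AnalyticAt ℂ G (z, star z))
    (hg : ∀ᶠ x in 𝓝 z, g x = G (x, star x)) (j : Fin n) :
    fderiv ℝ g z (Pi.single j Complex.I) = Complex.I *
      (fderivFst G (z, star z) (Pi.single j 1) - fderivSnd G (z, star z) (Pi.single j 1)) := by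
  have hI : (Pi.single j Complex.I : Fin n → ℂ) = Complex.I • Pi.single j 1 := by
    rw [← Pi.single_smul, smul_eq_mul, mul_one]
  rw [fderiv_of_polarization hG hg, hI, star_smul, Pi.star_single, star_one]
  simp only [map_smul, smul_eq_mul, Complex.star_def, Complex.conj_I]
  ring

lemma wirtZ_of_polarization (hG : AnalyticAt ℂ G (z, star z))
    (hg : ∀ᶠ x in 𝓝 z, g x = G (x, star x)) (j : Fin n) :
    wirtZ g j z = fderivFst G (z, star z) (Pi.single j 1) := by
  rw [wirtZ, fderiv_single_I_of_polarization hG hg, fderiv_of_polarization hG hg, Pi.star_single,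
    star_one, ← mul_assoc, Complex.I_mul_I]
  ring

lemma wirtZbar_of_polarization (hG : AnalyticAt ℂ G (z, star z))
    (hg : ∀ᶠ x in 𝓝 z, g x = G (x, star x)) (j : Fin n) :
    wirtZbar g j z = fderivSnd G (z, star z) (Pi.single j 1) := by
  rw [wirtZbar, fderiv_single_I_of_polarization hG hg, fderiv_of_polarization hG hg, Pi.star_single,
    star_one, ← mul_assoc, Complex.I_mul_I]
  ring

lemma wirtZbar_wirtZ_of_polarization (hG : AnalyticAt ℂ G (z, star z))
    (hg : ∀ᶠ x in 𝓝 z, g x = G (x, star x)) (i j : Fin n) :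
    wirtZbar (wirtZ g i) j z = mixedHessian G (z, star z) (Pi.single i 1) (Pi.single j 1) := by
  have hreal : ContinuousAt (fun x : Fin n → ℂ => (x, star x)) z := by fun_prop
  have hwirtZ : ∀ᶠ x in 𝓝 z, wirtZ g i x = fderivFst G (x, star x) (Pi.single i 1) := by
    filter_upwards [hreal.eventually hG.eventually_analyticAt, hg.eventually_nhds] with x hGx hgx
    exact wirtZ_of_polarization hGx hgx i
  rw [wirtZbar_of_polarization (G := fun x => fderivFst G x (Pi.single i 1))
    (analyticAt_fderivFst hG _) hwirtZ]
  exact fderiv_fderivFst hG _ _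

lemma sum_wirtZ_mul (hG : AnalyticAt ℂ G (z, star z)) (hg : ∀ᶠ x in 𝓝 z, g x = G (x, star x))
    (v : Fin n → ℂ) : ∑ j, wirtZ g j z * v j = fderivFst G (z, star z) v := by
  conv_rhs => rw [pi_eq_sum_univ' v]
  simp [wirtZ_of_polarization hG hg, mul_comm]

lemma sum_bilin_single (B : (Fin n → ℂ) →L[ℂ] (Fin n → ℂ) →L[ℂ] ℂ) (v w : Fin n → ℂ) :
    ∑ i, ∑ j, B (Pi.single i 1) (Pi.single j 1) * v i * w j = B v w := by
  conv_rhs => rw [pi_eq_sum_univ' v, pi_eq_sum_univ' w]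
  rw [Finset.sum_comm]
  simp [Finset.mul_sum, mul_comm, mul_left_comm]

lemma sum_wirtZbar_wirtZ_mul (hG : AnalyticAt ℂ G (z, star z))
    (hg : ∀ᶠ x in 𝓝 z, g x = G (x, star x)) (v : Fin n → ℂ) :
    ∑ i, ∑ j, wirtZbar (wirtZ g i) j z * v i * (starRingEnd ℂ) (v j) =
      mixedHessian G (z, star z) v (star v) := by
  rw [← sum_bilin_single (mixedHessian G (z, star z))]
  simp [wirtZbar_wirtZ_of_polarization hG hg]

end Wirtinger

lemma fderiv_ne_zero_of_wirtZ_ne_zero {n : ℕ} {F : (Fin n → ℂ) → ℝ} {z : Fin n → ℂ} {j : Fin n}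
    (hF : DifferentiableAt ℝ F z) (hne : wirtZ (fun x => (F x : ℂ)) j z ≠ 0) :
    fderiv ℝ F z ≠ 0 := by
  intro hzero
  have hderiv : HasFDerivAt (fun x => (F x : ℂ)) (Complex.ofRealCLM.comp (fderiv ℝ F z)) z :=
    Complex.ofRealCLM.hasFDerivAt.comp z hF.hasFDerivAt
  exact hne (by simp [wirtZ, hderiv.fderiv, hzero])

lemma LeviFlatGerm.isPolarizedLeviFlat {n : ℕ} {F : (Fin n → ℂ) → ℝ} (hlevi : LeviFlatGerm F)
    {FC : (Fin n → ℂ) × (Fin n → ℂ) → ℂ} (hFC : AnalyticAt ℂ FC 0)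
    (hreal : ∀ᶠ z in 𝓝 0, FC (z, star z) = F z) : IsPolarizedLeviFlat FC := by
  filter_upwards [hlevi, hreal, hreal.eventually_nhds,
    tendsto_prodMk_star.eventually hFC.eventually_analyticAt]
    with z hz hFz hFnear hFCz hzero hne v hv
  have hpol : ∀ᶠ x in 𝓝 z, (F x : ℂ) = FC (x, star x) := hFnear.mono fun _ => Eq.symm
  have hdiff : DifferentiableAt ℝ F z :=
    (Complex.reCLM.differentiableAt.comp z
      (hasFDerivAt_of_polarization hFCz hpol).differentiableAt :)
  obtain ⟨j, hj⟩ : ∃ j, wirtZ (fun x => (F x : ℂ)) j z ≠ 0 := by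
    by_contra! hwirt
    exact hne (ContinuousLinearMap.ext fun u => by simp [← sum_wirtZ_mul hFCz hpol, hwirt])
  rw [← sum_wirtZbar_wirtZ_mul hFCz hpol]
  refine hz (by simpa [hFz] using hzero) (fderiv_ne_zero_of_wirtZ_ne_zero hdiff hj) v ?_
  rw [sum_wirtZ_mul hFCz hpol, hv]

lemma IsPolarizedLeviFlat.const_mul {V : Type*} [NormedAddCommGroup V] [NormedSpace ℂ V]
    [StarAddMonoid V] {F : V × V → ℂ}
    (hlevi : IsPolarizedLeviFlat F) {c : ℂ} (hc : c ≠ 0) :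
    IsPolarizedLeviFlat fun x => c * F x := by
  have hderiv : fderiv ℂ (fun x => c * F x) = c • fderiv ℂ F := fderiv_const_smul_field c
  have hfst (x : V × V) (a : V) : fderivFst (fun x => c * F x) x a = c * fderivFst F x a := by
    simp [fderivFst, hderiv]
  have hmixed (x : V × V) (a b : V) :
      mixedHessian (fun x => c * F x) x a b = c * mixedHessian F x a b := by
    have hderiv' : fderiv ℂ (c • fderiv ℂ F) = c • fderiv ℂ (fderiv ℂ F) :=
      fderiv_const_smul_field (f := fderiv ℂ F) c
    simp [mixedHessian, hderiv, hderiv']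
  filter_upwards [hlevi] with z hz hzero hne v hv
  have hne' : fderivFst F (z, star z) ≠ 0 := fun h =>
    hne (ContinuousLinearMap.ext fun a => by simp [hfst, h])
  rw [hfst] at hv
  rw [hmixed, hz ((mul_eq_zero.1 hzero).resolve_left hc) hne' v
    ((mul_eq_zero.1 hv).resolve_left hc), mul_zero]

section LeviFlat

variable {n k : ℕ} {p : (Fin n → ℂ) → ℂ} {F H : (Fin n → ℂ) → ℝ}

/-- `FC` is the polarization of `2 F`, so that its leading form is `p(z) + p̄(w)`. -/
lemma exists_polarization_isStrictTransform (hp : IsIsolatedForm k p)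
    (hH : VanishesToOrder ℝ (k + 1) H) (hFeq : ∀ᶠ z in 𝓝 0, F z = (p z).re + H z) :
    ∃ FC Φ, IsStrictTransform k p (starConj p) FC Φ ∧ (∀ ξ, FC (swapStar _ ξ) = star (FC ξ)) ∧
      ∀ᶠ z in 𝓝 0, FC (z, star z) = 2 * F z := by
  obtain ⟨HC, hHC, hreal, hherm⟩ := exists_polarization hH
  obtain ⟨Φ, hΦ⟩ := exists_isStrictTransform hp hp.starConj
    (F := fun x => p x.1 + starConj p x.2 + 2 * HC x) (by simpa using hHC.const_smul 2)
  refine ⟨_, Φ, hΦ, fun ξ => ?_, ?_⟩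
  · simp only [swapStar_apply, starConj, hherm, star_add, star_mul', star_star, star_ofNat]
    ring
  · filter_upwards [hFeq, hreal] with z hFz hHz
    rw [hHz, hFz, starConj, star_star, Complex.star_def, Complex.add_conj]
    push_cast
    ring

theorem LeviFlatGerm.exists_eventually_eq_zero_iff_re_eq_zero (hlevi : LeviFlatGerm F)
    (hp : IsIsolatedForm k p) (hH : VanishesToOrder ℝ (k + 1) H)
    (hFeq : ∀ᶠ z in 𝓝 0, F z = (p z).re + H z) :
    ∃ f : (Fin n → ℂ) → ℂ, VanishesToOrder ℂ (k + 1) (fun z => f z - p z) ∧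
      ∀ᶠ z in 𝓝 0, F z = 0 ↔ (f z).re = 0 := by
  obtain ⟨FC, Φ, hΦ, hherm, hreal⟩ := exists_polarization_isStrictTransform hp hH hFeq
  have hhalf : IsPolarizedLeviFlat fun x => 2⁻¹ * FC x :=
    hlevi.isPolarizedLeviFlat (analyticAt_const.mul hΦ.analyticAt)
      (hreal.mono fun z hz => by simp [hz])
  obtain ⟨f, hf, hzero⟩ := hΦ.exists_eventually_eq_zero_iff_re_eq_zero hherm
    (by simpa using hhalf.const_mul two_ne_zero)
  refine ⟨f, hf, ?_⟩
  filter_upwards [hreal, hzero] with z hFz hfz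
  rw [← hfz, hFz]
  simp

end LeviFlat

open MvPolynomial in
theorem stmt_12_general {n k : ℕ} (hn : 2 ≤ n) (hk : 0 < k) {P : MvPolynomial (Fin n) ℂ}
    (hPhom : P.IsHomogeneous k)
    (hPsing : ∀ᶠ z in 𝓝 (0 : Fin n → ℂ), (∀ i, eval z (pderiv i P) = 0) → z = 0)
    {F H : (Fin n → ℂ) → ℝ} (hH : AnalyticAt ℝ H 0)
    (hFeq : ∀ᶠ z in 𝓝 (0 : Fin n → ℂ), F z = (eval z P).re + H z)
    (hHord : H =O[𝓝 0] fun z => ‖z‖ ^ (k + 1)) (hLF : LeviFlatGerm F) :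
    ∃ f : (Fin n → ℂ) → ℂ, AnalyticAt ℂ f 0 ∧
      ((fun z => f z - eval z P) =O[𝓝 0] fun z => ‖z‖ ^ (k + 1)) ∧
      ∀ᶠ z in 𝓝 0, F z = 0 ↔ (f z).re = 0 := by
  have hP := isIsolatedForm_eval hn hk hPhom hPsing
  obtain ⟨f, hf, hzero⟩ := hLF.exists_eventually_eq_zero_iff_re_eq_zero hP ⟨hH, hHord⟩ hFeq
  have hanalytic : AnalyticAt ℂ f 0 := by simpa using hf.analyticAt.fun_add (hP.analyticAt 0)
  exact ⟨f, hanalytic, hf.isBigO, hzero⟩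

open MvPolynomial in
/-- **Theorem (Fernández-Pérez).** A singular Levi-flat hypersurface
`M = {Re(P(z)) + H(z,z̄) = 0}`, with `P` homogeneous of degree `k` with isolated
singularity and `H = O(|z|^{k+1})`, is defined by the vanishing of the real part of a
holomorphic function `f(z) = P(z) + O(|z|^{k+1})`. -/
theorem stmt_12 (n : ℕ) (hn : 2 ≤ n) (k : ℕ) (hk : 0 < k)
    (P : MvPolynomial (Fin n) ℂ)
    -- `P` is a complex homogeneous polynomial of degree `k`
    (hPhom : P.IsHomogeneous k)
    -- `P` has an isolated singularity at `0 ∈ ℂⁿ`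
    (hPcrit : ∀ i, eval (0 : Fin n → ℂ) (pderiv i P) = 0)
    (hPsing : ∀ᶠ z in 𝓝 (0 : Fin n → ℂ), (∀ i, eval z (pderiv i P) = 0) → z = 0)
    (F H : (Fin n → ℂ) → ℝ)
    (hF : AnalyticAt ℝ F 0) (hH : AnalyticAt ℝ H 0)
    -- `F(z) = Re(P(z)) + H(z, z̄)` with `H = O(|z|^{k+1})`
    (hFeq : ∀ᶠ z in 𝓝 (0 : Fin n → ℂ), F z = (eval z P).re + H z)
    (hHord : (fun z : Fin n → ℂ => H z) =O[𝓝 0] fun z => ‖z‖ ^ (k + 1))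
    -- `M = {F = 0}` is a singular hypersurface at `0`
    (hF0 : F 0 = 0) (hsing : fderiv ℝ F 0 = 0)
    (hirr : IrreducibleRGerm F)
    (hLF : LeviFlatGerm F) :
    ∃ f : (Fin n → ℂ) → ℂ, AnalyticAt ℂ f 0 ∧
      -- `f(z) = P(z) + O(|z|^{k+1})`
      ((fun z : Fin n → ℂ => f z - eval z P) =O[𝓝 0] fun z => ‖z‖ ^ (k + 1)) ∧
      -- `M = {Re(f) = 0}` as germs of sets at `0`
      (∀ᶠ z in 𝓝 (0 : Fin n → ℂ), (F z = 0 ↔ (f z).re = 0)) :=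
  stmt_12_general hn hk hPhom hPsing hH hFeq hHord hLF
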